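/- Let a₀, …, a₁₁ ∈ ℂ³ be nonzero, pairwise linearly independent vectors defining a central arrangement of 12 planes in ℂ³ (equivalently, 12 lines in the complex projective plane) with Milnor fiber F = {z ∈ ℂ³ : ∏_{i<12} ℓᵢ(z) = 1} and basepoint z₀ ∈ F. Suppose there exists j₃ < 12 such that every nonzero v ∈ ℂ³ with ℓ_{j₃}(v) = 0 has m_v ≤ 3, and some nonzero v ∈ ℂ³ with ℓ_{j₃}(v) = 0 has m_v = 3 (the line ker ℓ_{j₃} contains multiple points of multiplicity 2 and 3 only, with at least one of multiplicity 3). Suppose also there exists j₄ < 12 such that every nonzero v ∈ ℂ³ with ℓ_{j₄}(v) = 0 has m_v ∈ {1, 2, 4}, and some nonzero v ∈ ℂ³ with ℓ_{j₄}(v) = 0 has m_v = 4 (the line ker ℓ_{j₄} contains multiple points of multiplicity 2 and 4 only, with at least one of multiplicity 4). Then dim_ℂ (ℂ ⊗_ℤ Ab π₁(F, z₀)) = 11, i.e. the first Betti number of F with complex coefficients equals 11. -/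

import Mathlib

section
open Set Topology

set_option linter.unusedSectionVars false

namespace Milnor

/-- A homotopy-invariant, multiplicative assignment of group elements to the curves of `X`,
axiomatized by its behaviour on constant curves and on squares. -/
structure Transport {E : Type*} [TopologicalSpace E] (X : Set E) (G : Type*) [Group G] where
  A : (ℝ → E) → G
  const : ∀ x ∈ X, A (fun _ => x) = 1
  sq : ∀ S : ℝ → ℝ → E, Continuous (fun p : ℝ × ℝ => S p.1 p.2) →
    (∀ s ∈ Icc (0:ℝ) 1, ∀ t ∈ Icc (0:ℝ) 1, S s t ∈ X) →
    A (fun s => S s 0) * A (fun t => S 1 t) = A (fun t => S 0 t) * A (fun s => S s 1)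

/-- `γ` is a curve inside `X`. -/
def Curve {E : Type*} [TopologicalSpace E] (X : Set E) (γ : ℝ → E) : Prop :=
  Continuous γ ∧ ∀ t ∈ Icc (0:ℝ) 1, γ t ∈ X

section basics
variable {E : Type*} [NormedAddCommGroup E] [NormedSpace ℝ E] {X : Set E} {G : Type*} [Group G]
  (T : Transport X G)

theorem Curve.mono {X Y : Set E} {γ : ℝ → E} (h : Curve X γ) (hXY : X ⊆ Y) : Curve Y γ :=
  ⟨h.1, fun t ht => hXY (h.2 t ht)⟩

theorem mem0 : (0:ℝ) ∈ Icc (0:ℝ) 1 := ⟨le_refl _, zero_le_one⟩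
theorem mem1 : (1:ℝ) ∈ Icc (0:ℝ) 1 := ⟨zero_le_one, le_refl _⟩

theorem Transport.congr {γ δ : ℝ → E} (hγ : Curve X γ) (hδ : Continuous δ)
    (h : ∀ t ∈ Icc (0:ℝ) 1, γ t = δ t) : T.A γ = T.A δ := by
  have := T.sq (fun s t => γ s + t • (δ s - γ s)) (by
    have h1 := hγ.1
    fun_prop) (by
    intro s hs t ht
    simp only [← h s hs, sub_self, smul_zero, add_zero]
    exact hγ.2 s hs)
  simp only [zero_smul, add_zero, one_smul, ← h 1 mem1, ← h 0 mem0, sub_self, smul_zero,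
    T.const _ (hγ.2 0 mem0), T.const _ (hγ.2 1 mem1), mul_one, one_mul, add_sub_cancel] at this
  exact this

/-- Homotopy relative to the endpoints. -/
theorem Transport.homotopy (S : ℝ → ℝ → E) (hS : Continuous (fun p : ℝ × ℝ => S p.1 p.2))
    (hX : ∀ s ∈ Icc (0:ℝ) 1, ∀ t ∈ Icc (0:ℝ) 1, S s t ∈ X) {a b : E}
    (h0 : ∀ t, S 0 t = a) (h1 : ∀ t, S 1 t = b) :
    T.A (fun s => S s 0) = T.A (fun s => S s 1) := by
  have := T.sq S hS hX
  have ha : a ∈ X := h0 0 ▸ hX 0 mem0 0 mem0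
  have hb : b ∈ X := h1 0 ▸ hX 1 mem1 0 mem0
  simpa [h0, h1, T.const a ha, T.const b hb] using this

theorem Transport.split {γ : ℝ → E} (hγ : Curve X γ) {a b c : ℝ} (ha : 0 ≤ a) (hab : a ≤ b)
    (hbc : b ≤ c) (hc : c ≤ 1) :
    T.A (fun s => γ (a + (b - a) * s)) * T.A (fun s => γ (b + (c - b) * s)) =
      T.A (fun s => γ (a + (c - a) * s)) := by
  have := T.sq (fun s t => γ (a + s * ((b - a) + t * (c - b)))) (by
    have h1 := hγ.1
    fun_prop) (by
    intro s hs t ht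
    apply hγ.2
    have h1 : 0 ≤ (b - a) + t * (c - b) := by nlinarith [ht.1]
    have h2 : (b - a) + t * (c - b) ≤ c - a := by nlinarith [ht.2]
    constructor
    · nlinarith [hs.1]
    · nlinarith [hs.1, hs.2])
  simp only [zero_mul, add_zero, one_mul, T.const _ (hγ.2 a ⟨ha, by linarith⟩)] at this
  have e1 : (fun s => γ (a + (b - a) * s)) = fun s => γ (a + s * (b - a)) := by
    funext s; congr 1; ring
  have e2 : (fun s => γ (b + (c - b) * s)) = fun s => γ (a + (b - a + s * (c - b))) := by
    funext s; congr 1; ring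
  have e3 : (fun s => γ (a + (c - a) * s)) = fun s => γ (a + s * (b - a + (c - b))) := by
    funext s; congr 1; ring
  rw [e1, e2, e3, this]

theorem Transport.reverse {γ : ℝ → E} (hγ : Curve X γ) :
    T.A (fun t => γ (1 - t)) = (T.A γ)⁻¹ := by
  have := T.sq (fun s t => γ (s * (1 - t))) (by
    have h1 := hγ.1
    fun_prop) (by
    intro s hs t ht
    apply hγ.2
    constructor
    · nlinarith [hs.1, ht.2]
    · nlinarith [hs.1, hs.2, ht.1, ht.2])
  simp only [zero_mul, sub_zero, mul_one, one_mul, sub_self, mul_zero,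
    T.const _ (hγ.2 0 mem0)] at this
  exact eq_inv_of_mul_eq_one_right this

/-- Concatenation of curves. -/
noncomputable def concat (γ δ : ℝ → E) : ℝ → E :=
  fun t => if t ≤ 1 / 2 then γ (2 * t) else δ (2 * t - 1)

theorem continuous_concat {γ δ : ℝ → E} (hγ : Continuous γ) (hδ : Continuous δ)
    (h : γ 1 = δ 0) : Continuous (concat γ δ) := by
  unfold concat
  refine Continuous.if_le (by fun_prop) (by fun_prop) (by fun_prop) (by fun_prop) ?_
  intro x hx
  subst hx
  norm_num [h]

theorem curve_concat {γ δ : ℝ → E} (hγ : Curve X γ) (hδ : Curve X δ) (h : γ 1 = δ 0) :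
    Curve X (concat γ δ) := by
  refine ⟨continuous_concat hγ.1 hδ.1 h, ?_⟩
  intro t ht
  unfold concat
  split_ifs with h1
  · exact hγ.2 _ ⟨by linarith [ht.1], by linarith⟩
  · push Not at h1
    exact hδ.2 _ ⟨by linarith, by linarith [ht.2]⟩

@[simp] theorem concat_zero (γ δ : ℝ → E) : concat γ δ 0 = γ 0 := by simp [concat]
@[simp] theorem concat_one (γ δ : ℝ → E) : concat γ δ 1 = δ 1 := by norm_num [concat]

theorem Transport.concat {γ δ : ℝ → E} (hγ : Curve X γ) (hδ : Curve X δ) (h : γ 1 = δ 0) :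
    T.A (concat γ δ) = T.A γ * T.A δ := by
  have hc := curve_concat hγ hδ h
  have := T.split hc (a := 0) (b := 1/2) (c := 1) le_rfl (by norm_num) (by norm_num) le_rfl
  simp only [sub_zero, zero_add, one_mul] at this
  rw [← this]
  congr 1
  · symm
    apply T.congr hγ
    · have := hc.1
      fun_prop
    · intro t ht
      rw [Milnor.concat, if_pos (by linarith [ht.2])]
      congr 1; ring
  · symm
    apply T.congr hδ
    · have := hc.1
      fun_prop
    · intro t ht
      rw [Milnor.concat]
      split_ifs with h1
      · have : t = 0 := by linarith [ht.1]
        subst this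
        norm_num [h]
      · congr 1; ring

/-- Pull back along a continuous map. -/
def Transport.comap {E' : Type*} [TopologicalSpace E'] (g : E' → E) (hg : Continuous g)
    (Y : Set E') (hY : ∀ y ∈ Y, g y ∈ X) : Transport Y G where
  A γ := T.A (fun t => g (γ t))
  const x hx := T.const _ (hY x hx)
  sq S hS hX := T.sq (fun s t => g (S s t)) (hg.comp hS) (fun s hs t ht => hY _ (hX s hs t ht))

end basics

section flat
variable {E : Type*} [NormedAddCommGroup E] [NormedSpace ℝ E] {X : Set E} {Ω : Type*}
  (T : Transport X (Equiv.Perm Ω))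

/-- `f` is invariant under the transport along curves in `W`. -/
def Transport.Flat (W : Set E) (f : E → Ω) : Prop :=
  ∀ γ : ℝ → E, Curve W γ → T.A γ (f (γ 1)) = f (γ 0)

theorem Transport.Flat.mono {T : Transport X (Equiv.Perm Ω)} {W W' : Set E} {f : E → Ω}
    (h : T.Flat W f) (hW : W' ⊆ W) : T.Flat W' f := fun γ hγ => h γ (hγ.mono hW)

theorem Transport.Flat.congr {T : Transport X (Equiv.Perm Ω)} {W : Set E} {f g : E → Ω}
    (h : T.Flat W f) (hfg : ∀ x ∈ W, f x = g x) : T.Flat W g := fun γ hγ => by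
  rw [← hfg _ (hγ.2 1 mem1), ← hfg _ (hγ.2 0 mem0)]
  exact h γ hγ

theorem Transport.flat_of_local {W : Set E} (hWX : W ⊆ X) {f : E → Ω}
    (h : ∀ q ∈ W, ∃ N ∈ 𝓝 q, T.Flat (N ∩ W) f) : T.Flat W f := by
  intro γ hγ
  have hγX := hγ.mono hWX
  let P : unitInterval → Prop := fun t => T.A (fun s => γ (t * s)) (f (γ t)) = f (γ 0)
  have key : ∀ t : unitInterval, ∀ᶠ t' in 𝓝 t, P t' = P t := by
    intro t
    obtain ⟨N, hN, hf⟩ := h (γ t) (hγ.2 t t.2)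
    have hpre : (fun s : ℝ => γ s) ⁻¹' N ∈ 𝓝 (t : ℝ) := hγ.1.continuousAt.preimage_mem_nhds hN
    obtain ⟨ε, hε, hball⟩ := Metric.mem_nhds_iff.1 hpre
    have hstep : ∀ a b : unitInterval, (a:ℝ) ≤ b → (a:ℝ) ∈ Metric.ball (t:ℝ) ε →
        (b:ℝ) ∈ Metric.ball (t:ℝ) ε → P a = P b := by
      intro a b hab ha hb
      have hseg : ∀ s ∈ Icc (0:ℝ) 1, (a:ℝ) + (b - a) * s ∈ Icc (a:ℝ) b := by
        intro s hs
        constructor <;> nlinarith [hs.1, hs.2]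
      have hconv : Icc (a:ℝ) b ⊆ Metric.ball (t:ℝ) ε :=
        (convex_ball (t:ℝ) ε).ordConnected.out ha hb
      have h1 := hf (fun s => γ (a + (b - a) * s)) ⟨by
        have := hγ.1
        fun_prop, by
        intro s hs
        refine ⟨hball (hconv (hseg s hs)), hγ.2 _ ?_⟩
        have := hseg s hs
        exact ⟨a.2.1.trans this.1, this.2.trans b.2.2⟩⟩
      have h2 := T.split hγX (a := 0) (b := a) (c := b) le_rfl a.2.1 hab b.2.2
      simp only [sub_zero, zero_add] at h2
      simp only [mul_one, mul_zero, add_zero, add_sub_cancel] at h1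
      simp only [P]
      rw [← h2, Equiv.Perm.mul_apply, h1]
    have hev : ∀ᶠ t' : unitInterval in 𝓝 t, (t' : ℝ) ∈ Metric.ball (t:ℝ) ε :=
      continuous_subtype_val.continuousAt.preimage_mem_nhds (Metric.ball_mem_nhds _ hε)
    filter_upwards [hev] with t' ht'
    rcases le_total (t:ℝ) t' with hle | hle
    · exact (hstep t t' hle (Metric.mem_ball_self hε) ht').symm
    · exact hstep t' t hle ht' (Metric.mem_ball_self hε)
  have hlc : IsLocallyConstant P := (IsLocallyConstant.iff_eventually_eq P).2 key
  have h01 := hlc.apply_eq_of_isPreconnected (isPreconnected_univ) (mem_univ (0:unitInterval))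
    (mem_univ (1:unitInterval))
  have h0 : P 0 := by
    simp [P, T.const _ (hγX.2 0 mem0)]
  have h1 : P 1 := h01 ▸ h0
  simpa [P] using h1

/-- A star-shaped set has flat sections. -/
theorem Transport.flat_star {K : Set E} (hK : K ⊆ X) {c : E} 
    (hs : ∀ q ∈ K, ∀ t ∈ Icc (0:ℝ) 1, q + t • (c - q) ∈ K) (ω : Ω) :
    T.Flat K (fun q => T.A (fun t => q + t • (c - q)) ω) := by
  intro γ hγ
  have h1 := hγ.1
  have := T.sq (fun s t => γ s + t • (c - γ s)) (by fun_prop)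
    (fun s hs' t ht => hK (hs _ (hγ.2 s hs') t ht))
  have hc : c ∈ X := by
    have := hs _ (hγ.2 0 mem0) 1 mem1
    simp only [one_smul, add_sub_cancel] at this
    exact hK this
  simp only [zero_smul, add_zero, one_smul, add_sub_cancel, T.const c hc, mul_one] at this
  beta_reduce
  rw [← this]
  rfl

/-- Sections which agree on the overlap of open sets glue. -/
theorem Transport.flat_union {U V : Set E} (W : Set E) (hW : W ⊆ X) (hU : IsOpen U) (hV : IsOpen V)
    {f g : E → Ω} (hWUV : W ⊆ U ∪ V)
    (hf : T.Flat (U ∩ W) f) (hg : T.Flat (V ∩ W) g) (hfg : ∀ x ∈ W, x ∈ U → x ∈ V → f x = g x) :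
    ∃ h : E → Ω, T.Flat W h := by
  classical
  refine ⟨fun x => if x ∈ U then f x else g x, T.flat_of_local hW ?_⟩
  intro q hq
  rcases hWUV hq with h | h
  · refine ⟨U, hU.mem_nhds h, hf.congr ?_⟩
    intro x hx
    simp [hx.1]
  · refine ⟨V, hV.mem_nhds h, hg.congr ?_⟩
    intro x hx
    by_cases hxU : x ∈ U
    · simp [hxU, hfg x hx.2 hxU hx.1]
    · simp [hxU]

/-- Loops with a unique fixed point, depending continuously on the base point. -/
theorem Transport.flat_loops {E' : Type*} [NormedAddCommGroup E'] [NormedSpace ℝ E']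
    (W : Set E') (j : E' → E) (P : E' → ℝ → E)
    (hP : Continuous (fun p : E' × ℝ => P p.1 p.2)) (h0 : ∀ y, P y 0 = j y) (h1 : ∀ y, P y 1 = j y)
    (hPX : ∀ y ∈ W, ∀ t ∈ Icc (0:ℝ) 1, P y t ∈ X) (f : E' → Ω)
    (hf : ∀ y ∈ W, T.A (P y) (f y) = f y) (hu : ∀ y ∈ W, ∀ c, T.A (P y) c = c → c = f y)
    (r : ℝ → E') (hr : Curve W r) : T.A (fun t => j (r t)) (f (r 1)) = f (r 0) := by
  have hc := hr.1
  have := T.sq (fun s t => P (r s) t) (hP.comp (f := fun p : ℝ × ℝ => (r p.1, p.2)) (by fun_prop))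
    (fun s hs t ht => hPX _ (hr.2 s hs) t ht)
  simp only [h0, h1] at this
  apply hu _ (hr.2 0 mem0)
  have h2 := congrArg (fun g : Equiv.Perm Ω => g (f (r 1))) this
  simp only [Equiv.Perm.mul_apply] at h2
  have h3 := hf _ (hr.2 1 mem1)
  change T.A (fun t => P (r 0) t) _ = _
  rw [← h2]
  change T.A _ (T.A (P (r 1)) _) = _
  rw [h3]

end flat
end Milnor

end

section
open Set Topology
set_option linter.unusedSectionVars false
namespace Milnor
section ext
variable {ι : Type*} [Fintype ι] (α β : ι → ℂ) {Ω : Type*}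

/-- The complement of the affine lines `y = α i * x + β i`. -/
def XSet : Set (ℂ × ℂ) := {q | ∀ i, q.2 ≠ α i * q.1 + β i}

theorem isOpen_XSet : IsOpen (XSet α β) := by
  have : XSet α β = ⋂ i, {q : ℂ × ℂ | q.2 ≠ α i * q.1 + β i} := by
    ext q; simp [XSet]
  rw [this]
  exact isOpen_iInter_of_finite fun i => isOpen_ne_fun (by fun_prop) (by fun_prop)

/-- A constant bounding all slopes and intercepts. -/
noncomputable def CC : ℝ := 1 + ∑ i, (‖α i‖ + ‖β i‖)

theorem CC_ge (i : ι) : 1 + (‖α i‖ + ‖β i‖) ≤ CC α β := by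
  unfold CC
  gcongr
  exact Finset.single_le_sum (f := fun i => ‖α i‖ + ‖β i‖) (fun i _ => by positivity)
    (Finset.mem_univ i)

theorem CC_ge_one : 1 ≤ CC α β := by
  unfold CC
  have : 0 ≤ ∑ i, (‖α i‖ + ‖β i‖) := by positivity
  linarith

theorem b_bound (i : ι) (x : ℂ) : ‖α i * x + β i‖ + 1 ≤ CC α β * (1 + ‖x‖) := by
  have h := CC_ge α β i
  have h1 : ‖α i * x + β i‖ ≤ ‖α i‖ * ‖x‖ + ‖β i‖ := by
    refine (norm_add_le _ _).trans ?_
    rw [norm_mul]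
  nlinarith [norm_nonneg x, norm_nonneg (α i), norm_nonneg (β i), mul_nonneg (norm_nonneg (β i)) (norm_nonneg x)]

/-- The region near vertical infinity. -/
def YSet : Set (ℂ × ℂ) := {q | CC α β * (1 + ‖q.1‖) < ‖q.2‖}

theorem isOpen_YSet : IsOpen (YSet α β) :=
  isOpen_lt (by fun_prop) (by fun_prop)

theorem YSet_subset : YSet α β ⊆ XSet α β := by
  intro q hq i h
  have := b_bound α β i q.1
  have h2 : CC α β * (1 + ‖q.1‖) < ‖q.2‖ := hq
  rw [h] at h2
  linarith

variable {α β} (T : Transport (XSet α β) (Equiv.Perm Ω))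

/-- Flatness along the vertical line over `x`. -/
def VFlat (x : ℂ) (W : Set ℂ) (g : ℂ → Ω) : Prop :=
  ∀ r : ℝ → ℂ, Curve W r → T.A (fun t => (x, r t)) (g (r 1)) = g (r 0)

/-- The fiber of the complement over `x`. -/
def Fib (α β : ι → ℂ) (x : ℂ) : Set ℂ := {y | ∀ i, y ≠ α i * x + β i}

theorem exists_fY {x₀ : ℂ} {f₀ : ℂ → Ω} (h₀ : VFlat T x₀ (Fib α β x₀) f₀) :
    ∃ fY : ℂ × ℂ → Ω, T.Flat (YSet α β) fY ∧ ∀ y, (x₀, y) ∈ YSet α β → fY (x₀, y) = f₀ y := by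
  let p : ℂ × ℂ → ℝ → ℂ × ℂ := fun q t =>
    (q.1 + (t : ℂ) * (x₀ - q.1), ((1 + t * ‖x₀‖ : ℝ) : ℂ) * q.2)
  have hp : ∀ q ∈ YSet α β, ∀ t ∈ Icc (0:ℝ) 1, p q t ∈ YSet α β := by
    intro q hq t ht
    have hq' : CC α β * (1 + ‖q.1‖) < ‖q.2‖ := hq
    change CC α β * (1 + ‖q.1 + (t:ℂ) * (x₀ - q.1)‖) < ‖((1 + t * ‖x₀‖ : ℝ) : ℂ) * q.2‖
    have h1 : ‖q.1 + (t:ℂ) * (x₀ - q.1)‖ ≤ ‖q.1‖ + t * ‖x₀‖ := by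
      have : q.1 + (t:ℂ) * (x₀ - q.1) = ((1 - t : ℝ) : ℂ) * q.1 + (t:ℂ) * x₀ := by
        push_cast; ring
      rw [this]
      refine (norm_add_le _ _).trans ?_
      rw [norm_mul, norm_mul, Complex.norm_real, Complex.norm_real, Real.norm_of_nonneg ht.1,
        Real.norm_of_nonneg (by linarith [ht.2])]
      nlinarith [norm_nonneg q.1, ht.1]
    have hpos : 0 ≤ t * ‖x₀‖ := mul_nonneg ht.1 (norm_nonneg _)
    rw [norm_mul, Complex.norm_real, Real.norm_of_nonneg (by linarith)]
    have hC := CC_ge_one α β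
    have hn := norm_nonneg q.1
    calc CC α β * (1 + ‖q.1 + (t:ℂ) * (x₀ - q.1)‖) ≤ CC α β * (1 + (‖q.1‖ + t * ‖x₀‖)) := by gcongr
      _ ≤ (1 + t * ‖x₀‖) * (CC α β * (1 + ‖q.1‖)) := by
        nlinarith [mul_nonneg hpos hn, mul_nonneg (mul_nonneg hpos hn) (by linarith : 0 ≤ CC α β)]
      _ < _ := by
        apply mul_lt_mul_of_pos_left hq'
        linarith
  have hpc : Continuous (fun z : (ℂ × ℂ) × ℝ => p z.1 z.2) := by
    fun_prop
  refine ⟨fun q => T.A (p q) (f₀ (p q 1).2), ?_, ?_⟩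
  · intro γ hγ
    have h1 := hγ.1
    have hsq := T.sq (fun s t => p (γ s) t) (hpc.comp (f := fun z : ℝ × ℝ => (γ z.1, z.2))
      (by fun_prop)) (fun s hs t ht => YSet_subset α β (hp _ (hγ.2 s hs) t ht))
    have htop := h₀ (fun s => (p (γ s) 1).2) ⟨by fun_prop, by
      intro s hs
      have h2 := YSet_subset α β (hp _ (hγ.2 s hs) 1 mem1)
      have h3 : (p (γ s) 1).1 = x₀ := by simp [p]
      intro i
      have := h2 i
      rwa [h3] at this⟩
    have e0 : (fun s => p (γ s) 0) = γ := by
      funext s; simp [p]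
    have e1 : (fun s => p (γ s) 1) = fun s => (x₀, (p (γ s) 1).2) := by
      funext s; simp [p]
    rw [e0, e1] at hsq
    have h5 := congrArg (fun g : Equiv.Perm Ω => g (f₀ (p (γ 1) 1).2)) hsq
    simp only [Equiv.Perm.mul_apply] at h5
    rw [htop] at h5
    exact h5
  · intro y hy
    have h1 := h₀ (fun t => (p (x₀, y) t).2) ⟨by fun_prop, by
      intro s hs i
      have h2 := YSet_subset α β (hp _ hy s hs) i
      simpa [p] using h2⟩
    have e : (fun t => (x₀, (p (x₀, y) t).2)) = p (x₀, y) := by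
      funext s; simp [p]
    rw [e] at h1
    simpa [p] using h1

/-- A flat section on a vertical line which agrees with `fY` near infinity. -/
def Good (fY : ℂ × ℂ → Ω) (x : ℂ) : Prop :=
  ∃ g : ℂ → Ω, VFlat T x (Fib α β x) g ∧ ∃ R : ℝ, ∀ y, R < ‖y‖ → g y = fY (x, y)

theorem good_spec {fY : ℂ × ℂ → Ω} (hfY : T.Flat (YSet α β) fY) {x : ℂ} (h : Good T fY x) :
    ∃ g : ℂ → Ω, VFlat T x (Fib α β x) g ∧ ∀ y, (x, y) ∈ YSet α β → g y = fY (x, y) := by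
  obtain ⟨g, hg, R, hR⟩ := h
  refine ⟨g, hg, ?_⟩
  intro y hy
  have hy' : CC α β * (1 + ‖x‖) < ‖y‖ := hy
  have hy0 : 1 ≤ ‖y‖ := by nlinarith [CC_ge_one α β, norm_nonneg x]
  let r : ℝ → ℂ := fun t => ((1 + t * (1 + |R|) : ℝ) : ℂ) * y
  have hrc : Continuous r := by fun_prop
  have hrY : ∀ t ∈ Icc (0:ℝ) 1, (x, r t) ∈ YSet α β := by
    intro t ht
    change CC α β * (1 + ‖x‖) < ‖r t‖
    have h0 : 0 ≤ t * (1 + |R|) := mul_nonneg ht.1 (by positivity)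
    simp only [r, norm_mul, Complex.norm_real]
    rw [Real.norm_of_nonneg (by linarith)]
    nlinarith
  have h1 := hg r ⟨hrc, fun t ht i => YSet_subset α β (hrY t ht) i⟩
  have h2 := hfY (fun t => (x, r t)) ⟨by fun_prop, hrY⟩
  have h3 : g (r 1) = fY (x, r 1) := by
    apply hR
    simp only [r, norm_mul, Complex.norm_real]
    rw [Real.norm_of_nonneg (by positivity)]
    nlinarith [le_abs_self R, abs_nonneg R]
  have h4 : r 0 = y := by simp [r]
  rw [h3] at h1
  simp only [h4] at h1 h2
  rw [← h1, h2]

/-- Critical values of the projection. -/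
def BSet (α β : ι → ℂ) : Set ℂ := {x | ∃ i j, i ≠ j ∧ α i * x + β i = α j * x + β j}

theorem good_local {fY : ℂ × ℂ → Ω} (hfY : T.Flat (YSet α β) fY) {x : ℂ} (hx : x ∉ BSet α β) :
    ∃ ε > 0, ∀ x' ∈ Metric.ball x ε, ∀ x'' ∈ Metric.ball x ε, Good T fY x'' → Good T fY x' := by
  classical
  -- separation constant
  obtain ⟨δ, hδ0, hδ1, hδ⟩ : ∃ δ : ℝ, 0 < δ ∧ δ ≤ 1 ∧
      ∀ i j, i ≠ j → 4 * δ ≤ ‖(α i * x + β i) - (α j * x + β j)‖ := by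
    have : ∃ δ : ℝ, 0 < δ ∧ δ ≤ 1 ∧ ∀ p ∈ (Finset.univ : Finset (ι × ι)), p.1 ≠ p.2 →
        4 * δ ≤ ‖(α p.1 * x + β p.1) - (α p.2 * x + β p.2)‖ := by
      generalize (Finset.univ : Finset (ι × ι)) = s
      induction s using Finset.induction_on with
      | empty => exact ⟨1, by norm_num, le_rfl, by simp⟩
      | insert p s _ ih =>
        obtain ⟨δ, h0, h1, h2⟩ := ih
        by_cases hp : p.1 = p.2
        · refine ⟨δ, h0, h1, ?_⟩
          intro q hq hne
          rcases Finset.mem_insert.1 hq with rfl | hq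
          · exact absurd hp hne
          · exact h2 q hq hne
        · have hpos : 0 < ‖(α p.1 * x + β p.1) - (α p.2 * x + β p.2)‖ := by
            rw [norm_pos_iff, sub_ne_zero]
            intro h
            exact hx ⟨p.1, p.2, hp, h⟩
          refine ⟨min δ (‖(α p.1 * x + β p.1) - (α p.2 * x + β p.2)‖ / 4), by positivity,
            (min_le_left _ _).trans h1, ?_⟩
          intro q hq hne
          rcases Finset.mem_insert.1 hq with rfl | hq
          · linarith [min_le_right δ (‖(α q.1 * x + β q.1) - (α q.2 * x + β q.2)‖ / 4)]
          · linarith [h2 q hq hne, min_le_left δ (‖(α p.1 * x + β p.1) - (α p.2 * x + β p.2)‖ / 4)]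
    obtain ⟨δ, h0, h1, h2⟩ := this
    exact ⟨δ, h0, h1, fun i j hij => h2 (i, j) (Finset.mem_univ _) hij⟩
  have hC := CC_ge_one α β
  have hC0 : 0 < CC α β := by linarith
  refine ⟨δ / (4 * CC α β), by positivity, ?_⟩
  intro x' hx' x'' hx'' hgood
  rw [mem_ball_iff_norm] at hx' hx''
  obtain ⟨g, hg, R, hR⟩ := hgood
  let b : ι → ℂ := fun i => α i * x' + β i
  have hαC : ∀ i, ‖α i‖ ≤ CC α β := fun i => by
    have := CC_ge α β i
    linarith [norm_nonneg (β i)]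
  have hεC : CC α β * (δ / (4 * CC α β)) = δ / 4 := by field_simp
  have hαx : ∀ i (z : ℂ), ‖z‖ ≤ δ / (4 * CC α β) → ‖α i * z‖ ≤ δ / 4 := by
    intro i z hz
    rw [norm_mul, ← hεC]
    exact mul_le_mul (hαC i) hz (norm_nonneg _) hC0.le
  have hsep : ∀ i j, i ≠ j → 3 * δ ≤ ‖b i - b j‖ := by
    intro i j hij
    have h1 := hδ i j hij
    have h2 := hαx i _ hx'.le
    have h3 := hαx j _ hx'.le
    have h4 : (α i * x + β i) - (α j * x + β j) =
        (b i - b j) - α i * (x' - x) + α j * (x' - x) := by simp only [b]; ring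
    rw [h4] at h1
    have h5 := norm_add_le ((b i - b j) - α i * (x' - x)) (α j * (x' - x))
    have h6 := norm_sub_le (b i - b j) (α i * (x' - x))
    linarith
  let d : ι → ℝ → ℂ := fun i s => α i * ((s : ℂ) * (x'' - x'))
  have hd : ∀ i, ∀ s ∈ Icc (0:ℝ) 1, ‖d i s‖ ≤ δ / 2 := by
    intro i s hs
    have h1 := hαx i _ hx'.le
    have h2 := hαx i _ hx''.le
    have h3 : d i s = (s:ℂ) * (α i * (x'' - x) - α i * (x' - x)) := by simp only [d]; ring
    rw [h3, norm_mul, Complex.norm_real, Real.norm_of_nonneg hs.1]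
    have h4 := norm_sub_le (α i * (x'' - x)) (α i * (x' - x))
    have h5 := norm_nonneg (α i * (x'' - x) - α i * (x' - x))
    nlinarith [hs.1, hs.2]
  let tent : ι → ℂ → ℝ := fun i y => max 0 (1 - ‖y - b i‖ / δ)
  have htent0 : ∀ i y, δ ≤ ‖y - b i‖ → tent i y = 0 := by
    intro i y h
    apply max_eq_left
    rw [sub_nonpos, le_div_iff₀ hδ0]
    linarith
  have htent1 : ∀ i y, ‖y - b i‖ ≤ δ → tent i y = 1 - ‖y - b i‖ / δ := by
    intro i y h
    apply max_eq_right
    rw [sub_nonneg, div_le_iff₀ hδ0]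
    linarith
  let Ψ : ℝ → ℂ → ℂ := fun s y => y + ∑ i, (tent i y : ℂ) * d i s
  have hΨc : Continuous (fun p : ℝ × ℂ => Ψ p.1 p.2) := by
    simp only [Ψ, tent, d]
    fun_prop
  have hΨfar : ∀ s y, (∀ i, δ ≤ ‖y - b i‖) → Ψ s y = y := by
    intro s y h
    simp only [Ψ]
    rw [Finset.sum_eq_zero, add_zero]
    intro i _
    rw [htent0 i y (h i)]
    simp
  have hΨnear : ∀ s y i, ‖y - b i‖ < δ → Ψ s y = y + (tent i y : ℂ) * d i s := by
    intro s y i h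
    simp only [Ψ]
    rw [Finset.sum_eq_single i]
    · intro k _ hk
      rw [htent0 k y]
      · simp
      · have h1 := hsep i k (Ne.symm hk)
        have h2 := norm_sub_le (y - b k) (y - b i)
        have h3 : (y - b k) - (y - b i) = b i - b k := by ring
        rw [h3] at h2
        linarith
    · simp
  have hΨX : ∀ s ∈ Icc (0:ℝ) 1, ∀ y, (∀ j, y ≠ b j) → ∀ j, Ψ s y ≠ b j + d j s := by
    intro s hs y hy j heq
    by_cases hnear : ∃ i, ‖y - b i‖ < δ
    · obtain ⟨i, hi⟩ := hnear
      rw [hΨnear s y i hi] at heq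
      have ht := htent1 i y hi.le
      have hq0 : 0 ≤ ‖y - b i‖ / δ := by positivity
      have hq1 : ‖y - b i‖ / δ ≤ 1 := by rw [div_le_one hδ0]; exact hi.le
      by_cases hij : j = i
      · subst hij
        have h1 : y - b j = ((‖y - b j‖ / δ : ℝ) : ℂ) * d j s := by
          rw [ht] at heq
          push_cast at heq ⊢
          linear_combination heq
        have h2 := congrArg norm h1
        rw [norm_mul, Complex.norm_real, Real.norm_of_nonneg hq0] at h2
        have h3 := hd j s hs
        have h4 : ‖y - b j‖ / δ * ‖d j s‖ ≤ ‖y - b j‖ / δ * (δ / 2) := by gcongr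
        have h5 : ‖y - b j‖ / δ * (δ / 2) = ‖y - b j‖ / 2 := by field_simp
        have h6 : ‖y - b j‖ ≤ 0 := by linarith
        exact hy j (sub_eq_zero.1 (norm_le_zero_iff.1 h6))
      · have h1 : b i - b j = d j s - (tent i y : ℂ) * d i s - (y - b i) := by
          linear_combination heq
        have h2 := hsep i j (Ne.symm hij)
        rw [h1] at h2
        have h3 := norm_sub_le (d j s - (tent i y : ℂ) * d i s) (y - b i)
        have h4 := norm_sub_le (d j s) ((tent i y : ℂ) * d i s)
        have h5 : ‖(tent i y : ℂ) * d i s‖ ≤ δ / 2 := by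
          rw [norm_mul, Complex.norm_real, ht, Real.norm_of_nonneg (by linarith)]
          nlinarith [hd i s hs, norm_nonneg (d i s)]
        linarith [hd j s hs]
    · push Not at hnear
      rw [hΨfar s y hnear] at heq
      have h1 := hnear j
      rw [heq, add_sub_cancel_left] at h1
      linarith [hd j s hs]
  -- the track of the isotopy
  let P : ℂ → ℝ → ℂ × ℂ := fun y t => (x' + (t:ℂ) * (x'' - x'), Ψ t y)
  have hPc : Continuous (fun p : ℂ × ℝ => P p.1 p.2) := by
    have : Continuous (fun p : ℂ × ℝ => Ψ p.2 p.1) :=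
      hΨc.comp (f := fun p : ℂ × ℝ => (p.2, p.1)) (by fun_prop)
    simp only [P]
    fun_prop
  have hPX : ∀ y ∈ Fib α β x', ∀ t ∈ Icc (0:ℝ) 1, P y t ∈ XSet α β := by
    intro y hy t ht j
    have := hΨX t ht y hy j
    intro h
    apply this
    simp only [P] at h
    rw [h]
    simp only [b, d]
    ring
  refine ⟨fun y => T.A (P y) (g (Ψ 1 y)), ?_, max R (CC α β * (1 + (‖x'‖ + ‖x''‖))), ?_⟩
  · intro r hr
    have hrc := hr.1
    have hsq := T.sq (fun s t => P (r s) t) (hPc.comp (f := fun z : ℝ × ℝ => (r z.1, z.2))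
      (by fun_prop)) (fun s hs t ht => hPX _ (hr.2 s hs) t ht)
    have e0 : (fun s => P (r s) 0) = fun s => (x', r s) := by
      funext s; simp [P, Ψ, d]
    have e1 : (fun s => P (r s) 1) = fun s => (x'', Ψ 1 (r s)) := by
      funext s; simp [P]
    rw [e0, e1] at hsq
    have htop := hg (fun s => Ψ 1 (r s))
      ⟨hΨc.comp (f := fun s : ℝ => ((1:ℝ), r s)) (by fun_prop), by
        intro s hs j
        have := hPX _ (hr.2 s hs) 1 mem1 j
        simpa [P] using this⟩
    have h5 := congrArg (fun g' : Equiv.Perm Ω => g' (g (Ψ 1 (r 1)))) hsq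
    simp only [Equiv.Perm.mul_apply] at h5
    rw [htop] at h5
    exact h5
  · intro y hy
    have hy1 : R < ‖y‖ := (le_max_left _ _).trans_lt hy
    have hy2 : CC α β * (1 + (‖x'‖ + ‖x''‖)) < ‖y‖ := (le_max_right _ _).trans_lt hy
    have hfar : ∀ i, δ ≤ ‖y - b i‖ := by
      intro i
      have h1 := b_bound α β i x'
      have h2 := norm_sub_norm_le y (b i)
      have h3 : ‖b i‖ + 1 ≤ CC α β * (1 + ‖x'‖) := h1
      nlinarith [norm_nonneg x'', norm_nonneg x']
    have hΨ := fun s => hΨfar s y hfar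
    have hPe : P y = fun t : ℝ => (x' + (t:ℂ) * (x'' - x'), y) := by
      funext t; simp [P, hΨ]
    beta_reduce
    rw [hΨ, hPe, hR y hy1]
    have := hfY (fun t : ℝ => (x' + (t:ℂ) * (x'' - x'), y)) ⟨by fun_prop, by
      intro t ht
      change CC α β * (1 + ‖x' + (t:ℂ) * (x'' - x')‖) < ‖y‖
      refine lt_of_le_of_lt ?_ hy2
      have h1 : x' + (t:ℂ) * (x'' - x') = ((1 - t : ℝ) : ℂ) * x' + (t:ℂ) * x'' := by
        push_cast; ring
      have h2 : ‖x' + (t:ℂ) * (x'' - x')‖ ≤ ‖x'‖ + ‖x''‖ := by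
        rw [h1]
        refine (norm_add_le _ _).trans ?_
        rw [norm_mul, norm_mul, Complex.norm_real, Complex.norm_real, Real.norm_of_nonneg ht.1,
          Real.norm_of_nonneg (by linarith [ht.2])]
        nlinarith [norm_nonneg x', norm_nonneg x'', ht.1, ht.2]
      gcongr⟩
    simpa using this
end ext
end Milnor

end

section
open Set Topology
set_option linter.unusedSectionVars false
namespace Milnor
section ext2

theorem tube {E : Type*} [NormedAddCommGroup E] {X : Set E} (hX : IsOpen X) {r : ℝ → E}
    (hr : Curve X r) : ∃ ε > 0, ∀ v : E, ‖v‖ < ε → ∀ t ∈ Icc (0:ℝ) 1, r t + v ∈ X := by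
  have hK : IsCompact (r '' Icc (0:ℝ) 1) := isCompact_Icc.image hr.1
  obtain ⟨ε, h0, hε⟩ := hK.exists_thickening_subset_open hX (by
    rintro _ ⟨t, ht, rfl⟩
    exact hr.2 t ht)
  refine ⟨ε, h0, fun v hv t ht => hε ?_⟩
  rw [Metric.mem_thickening_iff]
  exact ⟨r t, ⟨t, ht, rfl⟩, by simpa [dist_eq_norm] using hv⟩

variable {ι : Type*} [Fintype ι] {α β : ι → ℂ} {Ω : Type*}

theorem finite_BSet {x₀ : ℂ} (hx₀ : x₀ ∉ BSet α β) : (BSet α β).Finite := by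
  refine (Set.finite_range (fun p : ι × ι => (β p.2 - β p.1) / (α p.1 - α p.2))).subset ?_
  rintro x ⟨i, j, hij, h⟩
  refine ⟨(i, j), ?_⟩
  have hne : α i - α j ≠ 0 := by
    intro h0
    have h1 : α i = α j := sub_eq_zero.1 h0
    apply hx₀
    refine ⟨i, j, hij, ?_⟩
    rw [h1] at h ⊢
    have : β i = β j := add_left_cancel h
    rw [this]
  simp only
  rw [div_eq_iff hne]
  linear_combination -h

theorem one_lt_rank_complex : 1 < Module.rank ℝ ℂ := by
  rw [Complex.rank_real_complex]; norm_num

theorem path_compl {S : Set ℂ} (hS : S.Countable) {y y' : ℂ} (hy : y ∉ S) (hy' : y' ∉ S) :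
    ∃ r : ℝ → ℂ, Curve Sᶜ r ∧ r 0 = y ∧ r 1 = y' := by
  have h := (hS.isPathConnected_compl_of_one_lt_rank one_lt_rank_complex).joinedIn y hy y' hy'
  refine ⟨h.somePath.extend, ⟨h.somePath.continuous_extend, ?_⟩, by simp, by simp⟩
  intro t ht
  rw [Path.extend_apply _ ht]
  exact h.somePath_mem _

theorem path_fib {x y y' : ℂ} (hy : y ∈ Fib α β x) (hy' : y' ∈ Fib α β x) :
    ∃ r : ℝ → ℂ, Curve (Fib α β x) r ∧ r 0 = y ∧ r 1 = y' := by
  have he : Fib α β x = (range fun i => α i * x + β i)ᶜ := by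
    ext z; simp [Fib, eq_comm]
  rw [he] at hy hy' ⊢
  exact path_compl (finite_range _).countable hy hy'

variable (T : Transport (XSet α β) (Equiv.Perm Ω))

theorem good_all {fY : ℂ × ℂ → Ω} (hfY : T.Flat (YSet α β) fY) {x₀ : ℂ} (hx₀ : x₀ ∉ BSet α β)
    (hg : Good T fY x₀) {x : ℂ} (hx : x ∉ BSet α β) : Good T fY x := by
  have hconn : IsPreconnected (BSet α β)ᶜ :=
    ((finite_BSet hx₀).countable.isConnected_compl_of_one_lt_rank one_lt_rank_complex).isPreconnected
  have : PreconnectedSpace ((BSet α β)ᶜ : Set ℂ) := Subtype.preconnectedSpace hconn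
  let P : ((BSet α β)ᶜ : Set ℂ) → Prop := fun x => Good T fY x
  have hlc : IsLocallyConstant P := by
    rw [IsLocallyConstant.iff_eventually_eq]
    intro x
    obtain ⟨ε, h0, h⟩ := good_local T hfY x.2
    have hev : ∀ᶠ x' : ((BSet α β)ᶜ : Set ℂ) in 𝓝 x, (x' : ℂ) ∈ Metric.ball (x:ℂ) ε :=
      continuous_subtype_val.continuousAt.preimage_mem_nhds (Metric.ball_mem_nhds _ h0)
    filter_upwards [hev] with x' hx'
    exact propext ⟨h _ (Metric.mem_ball_self h0) _ hx', h _ hx' _ (Metric.mem_ball_self h0)⟩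
  have := hlc.apply_eq_of_preconnectedSpace ⟨x₀, hx₀⟩ ⟨x, hx⟩
  change Good T fY x₀ = Good T fY x at this
  rwa [← this]

theorem pathgood {fY : ℂ × ℂ → Ω} (hfY : T.Flat (YSet α β) fY) {x₀ : ℂ} (hx₀ : x₀ ∉ BSet α β)
    (hg : Good T fY x₀) (b : ℂ) (r : ℝ → ℂ) (hr : Curve (Fib α β b) r)
    (h0 : (b, r 0) ∈ YSet α β) (h1 : (b, r 1) ∈ YSet α β) :
    T.A (fun t => (b, r t)) (fY (b, r 1)) = fY (b, r 0) := by
  have hrc := hr.1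
  obtain ⟨ε, hε, htube⟩ := tube (isOpen_XSet α β) (r := fun t => (b, r t)) ⟨by fun_prop, hr.2⟩
  obtain ⟨ε0, hε0, htube0⟩ := tube (isOpen_YSet α β) (r := fun _ => (b, r 0))
    ⟨by fun_prop, fun _ _ => h0⟩
  obtain ⟨ε1, hε1, htube1⟩ := tube (isOpen_YSet α β) (r := fun _ => (b, r 1))
    ⟨by fun_prop, fun _ _ => h1⟩
  have hd : Dense (BSet α β)ᶜ := (finite_BSet hx₀).countable.dense_compl ℝ
  obtain ⟨x', hx', hdist⟩ := hd.exists_dist_lt b (ε := min ε (min ε0 ε1)) (by positivity)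
  have hsm : ∀ s ∈ Icc (0:ℝ) 1, ‖(((s:ℂ) * (x' - b), 0) : ℂ × ℂ)‖ < min ε (min ε0 ε1) := by
    intro s hs
    rw [Prod.norm_def]
    simp only [norm_mul, norm_zero, Complex.norm_real, Real.norm_of_nonneg hs.1]
    rw [max_eq_left (mul_nonneg hs.1 (norm_nonneg _))]
    refine lt_of_le_of_lt ?_ hdist
    rw [dist_comm, dist_eq_norm]
    exact mul_le_of_le_one_left (norm_nonneg _) hs.2
  obtain ⟨g, hgf, hgY⟩ := good_spec T hfY (good_all T hfY hx₀ hg hx')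
  have hmem : ∀ s ∈ Icc (0:ℝ) 1, ∀ t ∈ Icc (0:ℝ) 1, (b + (s:ℂ) * (x' - b), r t) ∈ XSet α β := by
    intro s hs t ht
    have := htube _ ((hsm s hs).trans_le (min_le_left _ _)) t ht
    simpa using this
  have hmem0 : ∀ s ∈ Icc (0:ℝ) 1, (b + (s:ℂ) * (x' - b), r 0) ∈ YSet α β := by
    intro s hs
    have := htube0 _ ((hsm s hs).trans_le ((min_le_right _ _).trans (min_le_left _ _))) 0 mem0
    simpa using this
  have hmem1 : ∀ s ∈ Icc (0:ℝ) 1, (b + (s:ℂ) * (x' - b), r 1) ∈ YSet α β := by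
    intro s hs
    have := htube1 _ ((hsm s hs).trans_le ((min_le_right _ _).trans (min_le_right _ _))) 0 mem0
    simpa using this
  have hsq := T.sq (fun s t => (b + (s:ℂ) * (x' - b), r t)) (by fun_prop) hmem
  have e0 := hfY (fun s : ℝ => (b + (s:ℂ) * (x' - b), r 0)) ⟨by fun_prop, hmem0⟩
  have e1 := hfY (fun s : ℝ => (b + (s:ℂ) * (x' - b), r 1)) ⟨by fun_prop, hmem1⟩
  have hx1 : b + ((1:ℝ):ℂ) * (x' - b) = x' := by push_cast; ring
  have hx2 : b + ((0:ℝ):ℂ) * (x' - b) = b := by push_cast; ring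
  simp only [hx1, hx2] at hsq e0 e1
  have e2 := hgf r ⟨hrc, by
    intro t ht i
    have := hmem 1 mem1 t ht i
    simpa only [hx1] using this⟩
  have m0 := hmem0 1 mem1
  have m1 := hmem1 1 mem1
  rw [hx1] at m0 m1
  rw [hgY _ m0, hgY _ m1] at e2
  have := congrArg (fun g : Equiv.Perm Ω => g (fY (x', r 1))) hsq
  simp only [Equiv.Perm.mul_apply] at this
  rw [e2, e0, e1] at this
  exact this.symm

/-- A flat section on one generic vertical line extends to the whole complement. -/
theorem ext_flat {x₀ : ℂ} (hx₀ : x₀ ∉ BSet α β) {f₀ : ℂ → Ω}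
    (h₀ : VFlat T x₀ (Fib α β x₀) f₀) : ∃ f, T.Flat (XSet α β) f := by
  obtain ⟨fY, hfY, hfY0⟩ := exists_fY T h₀
  have hg : Good T fY x₀ := ⟨f₀, h₀, CC α β * (1 + ‖x₀‖), fun y hy => (hfY0 y hy).symm⟩
  have hpg := pathgood T hfY hx₀ hg
  have hex : ∀ q : ℂ × ℂ, ∃ r : ℝ → ℂ, q ∈ XSet α β →
      (Curve (Fib α β q.1) r ∧ r 0 = q.2 ∧ (q.1, r 1) ∈ YSet α β) := by
    intro q
    by_cases hq : q ∈ XSet α β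
    swap
    · exact ⟨fun _ => 0, fun h => absurd h hq⟩
    have hfar : (q.1, ((CC α β * (1 + ‖q.1‖) + 1 : ℝ) : ℂ)) ∈ YSet α β := by
      change CC α β * (1 + ‖q.1‖) < ‖((CC α β * (1 + ‖q.1‖) + 1 : ℝ) : ℂ)‖
      have := CC_ge_one α β
      rw [Complex.norm_real, Real.norm_of_nonneg (by positivity)]
      linarith
    obtain ⟨r, hr, hr0, hr1⟩ := path_fib (α := α) (β := β) (x := q.1) (y := q.2)
      (y' := ((CC α β * (1 + ‖q.1‖) + 1 : ℝ) : ℂ)) hq (YSet_subset α β hfar)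
    exact ⟨r, fun _ => ⟨hr, hr0, by rw [hr1]; exact hfar⟩⟩
  choose ρ hρ using hex
  let f : ℂ × ℂ → Ω := fun q => T.A (fun t => (q.1, ρ q t)) (fY (q.1, ρ q 1))
  have hcurve : ∀ {b : ℂ} {r : ℝ → ℂ}, Curve (Fib α β b) r →
      Curve (XSet α β) (fun t => (b, r t)) := by
    intro b r hr
    have := hr.1
    exact ⟨by fun_prop, hr.2⟩
  have hwd : ∀ q ∈ XSet α β, ∀ r : ℝ → ℂ, Curve (Fib α β q.1) r → r 0 = q.2 →
      (q.1, r 1) ∈ YSet α β → T.A (fun t => (q.1, r t)) (fY (q.1, r 1)) = f q := by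
    intro q hq r hr hr0 hr1
    obtain ⟨h1, h2, h3⟩ := hρ q hq
    have hrc := hr.1
    have hrev : Curve (Fib α β q.1) (fun t => r (1 - t)) := ⟨by fun_prop, fun t ht =>
      hr.2 _ ⟨by linarith [ht.2], by linarith [ht.1]⟩⟩
    have hj : (fun t => r (1 - t)) 1 = ρ q 0 := by simp [hr0, h2]
    have hcc := curve_concat hrev h1 hj
    have := hpg q.1 _ hcc (by simpa using hr1) (by simpa using h3)
    simp only [concat_zero, concat_one, sub_zero] at this
    have e : (fun t => (q.1, concat (fun t => r (1 - t)) (ρ q) t)) =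
        concat (fun t => (q.1, r (1 - t))) (fun t => (q.1, ρ q t)) := by
      funext t
      unfold concat
      split_ifs <;> rfl
    rw [e, T.concat (hcurve hrev) (hcurve h1) (by simp [hr0, h2]),
      T.reverse (γ := fun t => (q.1, r t)) (hcurve hr), Equiv.Perm.mul_apply,
      Equiv.Perm.inv_eq_iff_eq] at this
    exact this.symm
  refine ⟨f, T.flat_of_local Subset.rfl ?_⟩
  intro q hq
  obtain ⟨h1, h2, h3⟩ := hρ q hq
  obtain ⟨ε, hε, htube⟩ := tube (isOpen_XSet α β) (hcurve h1)
  obtain ⟨ε1, hε1, htube1⟩ := tube (isOpen_YSet α β) (r := fun _ => (q.1, ρ q 1))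
    ⟨by fun_prop, fun _ _ => h3⟩
  refine ⟨Metric.ball q (min ε ε1), Metric.ball_mem_nhds _ (by positivity), ?_⟩
  intro γ hγ
  have hγc := hγ.1
  have hρc := h1.1
  have hγn : ∀ s ∈ Icc (0:ℝ) 1, ‖γ s - q‖ < min ε ε1 := fun s hs => by
    have := (hγ.2 s hs).1
    rwa [Metric.mem_ball, dist_eq_norm] at this
  let S : ℝ → ℝ → ℂ × ℂ := fun s t => (q.1, ρ q t) + (γ s - q)
  have hS : ∀ s ∈ Icc (0:ℝ) 1, ∀ t ∈ Icc (0:ℝ) 1, S s t ∈ XSet α β := fun s hs t ht =>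
    htube _ ((hγn s hs).trans_le (min_le_left _ _)) t ht
  have hS1 : ∀ s ∈ Icc (0:ℝ) 1, S s 1 ∈ YSet α β := fun s hs =>
    htube1 _ ((hγn s hs).trans_le (min_le_right _ _)) 1 mem1
  have hSc : Continuous (fun p : ℝ × ℝ => S p.1 p.2) := by fun_prop
  have hsq := T.sq S hSc hS
  have hS0 : (fun s => S s 0) = γ := by
    funext s
    simp only [S, h2]
    abel
  have hfl := hfY (fun s => S s 1) ⟨by fun_prop, hS1⟩
  have hval : ∀ s ∈ Icc (0:ℝ) 1, T.A (fun t => S s t) (fY (S s 1)) = f (γ s) := by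
    intro s hs
    have he : ∀ t, S s t = ((γ s).1, ρ q t + ((γ s).2 - q.2)) := by
      intro t
      simp only [S]
      ext <;> simp
    have := hwd (γ s) (hγ.2 s hs).2 (fun t => ρ q t + ((γ s).2 - q.2)) ⟨by fun_prop, by
      intro t ht i
      have := hS s hs t ht i
      rwa [he] at this⟩ (by simp [h2]) (by rw [← he 1]; exact hS1 s hs)
    simpa only [he] using this
  have h5 := congrArg (fun g : Equiv.Perm Ω => g (fY (S 1 1))) hsq
  simp only [Equiv.Perm.mul_apply] at h5
  rw [hS0, hval 1 mem1, hfl, hval 0 mem0] at h5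
  exact h5

end ext2
end Milnor

end

section
open Set Topology
set_option linter.unusedSectionVars false
namespace Milnor
section nontriv
variable {ι : Type*} [Fintype ι] {α β : ι → ℂ}

/-- `e t = exp (2 π i t)`. -/
noncomputable def ee (t : ℝ) : ℂ := Complex.exp (2 * Real.pi * Complex.I * t)

theorem continuous_ee : Continuous ee := by unfold ee; fun_prop

theorem norm_ee (t : ℝ) : ‖ee t‖ = 1 := by
  unfold ee
  rw [Complex.norm_exp]
  simp

theorem ee_zero : ee 0 = 1 := by simp [ee]
theorem ee_one : ee 1 = 1 := by simp [ee, Complex.exp_two_pi_mul_I]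
theorem ee_add (s t : ℝ) : ee (s + t) = ee s * ee t := by
  simp only [ee, ← Complex.exp_add]; congr 1; push_cast; ring
theorem ee_neg_mul (t : ℝ) : ee (-t) * ee t = 1 := by
  rw [← ee_add]; simp [ee_zero]
theorem ee_mul_neg (t : ℝ) : ee t * ee (-t) = 1 := by
  rw [mul_comm, ee_neg_mul]

/-- An affine transport, whose linear part is the monodromy of the `κ`-th power of the product
of the defining equations. -/
def AffT (T : Transport (XSet α β) (Equiv.Perm ℂ)) (κ : ℂ) : Prop :=
  ∀ γ, Curve (XSet α β) γ → ∀ u : ℝ → ℂ, Continuous u →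
    (∀ t ∈ Icc (0:ℝ) 1, Complex.exp (u t) = ∏ i, ((γ t).2 - α i * (γ t).1 - β i)) →
    ∀ c, T.A γ c = T.A γ 0 + Complex.exp (κ * (u 1 - u 0)) * c

variable {T : Transport (XSet α β) (Equiv.Perm ℂ)} {κ : ℂ}

theorem AffT.loop (hT : AffT T κ) {γ : ℝ → ℂ × ℂ} (hγ : Continuous γ) (k : ι → ℕ) (g : ι → ℂ)
    (h : ι → ℝ → ℂ) (hc : ∀ i, Continuous (h i)) (hh : ∀ i t, ‖h i t‖ < ‖g i‖)
    (hp : ∀ i, h i 1 = h i 0)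
    (hγe : ∀ i t, (γ t).2 - α i * (γ t).1 - β i = ee (t * k i) * (g i + h i t)) :
    Curve (XSet α β) γ ∧ ∀ c, T.A γ c = T.A γ 0 +
      Complex.exp (κ * (2 * Real.pi * Complex.I * (∑ i, k i : ℕ))) * c := by
  have hg : ∀ i, g i ≠ 0 := fun i h0 => by
    have := hh i 0
    rw [h0, norm_zero] at this
    linarith [norm_nonneg (h i 0)]
  have hne : ∀ i t, 1 + h i t / g i ∈ Complex.slitPlane := by
    intro i t
    apply Complex.mem_slitPlane_of_norm_lt_one
    rw [norm_div, div_lt_one (norm_pos_iff.2 (hg i))]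
    exact hh i t
  have hfac : ∀ i t, ee (t * k i) * (g i + h i t) = Complex.exp (2 * Real.pi * Complex.I * (t * k i)
      + Complex.log (g i) + Complex.log (1 + h i t / g i)) := by
    intro i t
    rw [Complex.exp_add, Complex.exp_add, Complex.exp_log (hg i),
      Complex.exp_log (Complex.slitPlane_ne_zero (hne i t)), ee]
    have := hg i
    push_cast
    field_simp
  have hcurve : Curve (XSet α β) γ := by
    refine ⟨hγ, fun t _ i hi => ?_⟩
    have h1 := hγe i t
    rw [hfac, hi] at h1
    apply Complex.exp_ne_zero _ (h1.symm.trans _)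
    ring
  refine ⟨hcurve, ?_⟩
  intro c
  have := hT γ hcurve (fun t => ∑ i, (2 * Real.pi * Complex.I * (t * k i)
      + Complex.log (g i) + Complex.log (1 + h i t / g i))) (by
      refine continuous_finsetSum _ fun i _ => ?_
      refine Continuous.add (by fun_prop) ?_
      have h1 := hc i
      exact Continuous.clog (by fun_prop) (hne i)) (by
      intro t ht
      rw [Complex.exp_sum]
      refine Finset.prod_congr rfl fun i _ => ?_
      rw [hγe, hfac]) c
  rw [this]
  congr 4
  rw [← Finset.sum_sub_distrib]
  push_cast
  rw [Finset.mul_sum]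
  refine Finset.sum_congr rfl fun i _ => ?_
  rw [hp]
  ring

theorem fix_exists {p : Equiv.Perm ℂ} {χ : ℂ} (hp : ∀ c, p c = p 0 + χ * c) (hχ : χ ≠ 1) :
    ∃ c, p c = c ∧ ∀ c', p c' = c' → c' = c := by
  have h1 : 1 - χ ≠ 0 := sub_ne_zero.2 (Ne.symm hχ)
  refine ⟨p 0 / (1 - χ), ?_, ?_⟩
  · rw [hp]; field_simp; ring
  · intro c hc
    rw [hp] at hc
    rw [eq_div_iff h1]
    linear_combination -hc

theorem nontriv_flat (hT : AffT T κ) {R : ℝ} (hβ : ∀ i, ‖β i‖ < R) {x₀ : ℂ}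
    (hsep : ∀ i k, α i ≠ α k → 5 * R < ‖(α i - α k) * x₀‖) (hR : 0 < R)
    (hinf : Complex.exp (κ * (2 * Real.pi * Complex.I * (Fintype.card ι : ℕ))) ≠ 1)
    (hcls : ∀ i, (∀ k, α k = α i → k = i) ∨
      Complex.exp (κ * (2 * Real.pi * Complex.I * (Nat.card {k // α k ≠ α i} : ℕ))) ≠ 1) :
    ∃ f₀, VFlat T x₀ (Fib α β x₀) f₀ := by
  classical
  have hee := continuous_ee
  have hRi : ∀ (z : ℂ) (t : ℝ), ‖ee t * z‖ = ‖z‖ := fun z t => by rw [norm_mul, norm_ee, one_mul]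
  -- the loops at infinity
  let Pinf : ℂ → ℝ → ℂ × ℂ := fun y t => (ee t * x₀, ee t * y)
  let Winf : Set ℂ := {y | ∀ i, R < ‖y - α i * x₀‖}
  have hPinf : ∀ y ∈ Winf, Curve (XSet α β) (Pinf y) ∧ ∀ c, T.A (Pinf y) c = T.A (Pinf y) 0 +
      Complex.exp (κ * (2 * Real.pi * Complex.I * (Fintype.card ι : ℕ))) * c := by
    intro y hy
    have := hT.loop (γ := Pinf y) (by fun_prop) (fun _ => 1) (fun i => y - α i * x₀)
      (fun i t => - (ee (-t) * β i)) (fun i => by fun_prop) (fun i t => by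
        rw [norm_neg, hRi]; exact (hβ i).trans (hy i)) (fun i => by
        have h1 : ee (-1) = 1 := by
          have := ee_neg_mul 1
          rwa [ee_one, mul_one] at this
        simp [h1, ee_zero]) (fun i t => by
        simp only [Pinf, Nat.cast_one, mul_one]
        linear_combination (β i) * ee_mul_neg t)
    simpa using this
  have een1 : ee (-1) = 1 := by
    have := ee_neg_mul 1
    rwa [ee_one, mul_one] at this
  -- loops near the parallel classes
  let single : ι → Prop := fun i => ∀ k, α k = α i → k = i
  let Pl : ι → ℂ → ℝ → ℂ × ℂ := fun i y t =>
    if single i then (ee t * x₀, β i + ee t * (y - α i * x₀ - β i) + α i * (ee t * x₀))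
    else (ee t * x₀, (y - α i * x₀) + α i * (ee t * x₀))
  let Wl : ι → Set ℂ := fun i => {y | ‖y - α i * x₀‖ < 2 * R}
  have hPlc : ∀ i, Continuous (fun p : ℂ × ℝ => Pl i p.1 p.2) := by
    intro i
    by_cases hs : single i
    · simp only [Pl, if_pos hs]; fun_prop
    · simp only [Pl, if_neg hs]; fun_prop
  have hPl : ∀ i, ∃ χ : ℂ, χ ≠ 1 ∧ ∀ y ∈ Fib α β x₀, y ∈ Wl i → Curve (XSet α β) (Pl i y) ∧
      ∀ c, T.A (Pl i y) c = T.A (Pl i y) 0 + χ * c := by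
    intro i
    by_cases hs : single i
    · refine ⟨_, hinf, ?_⟩
      intro y hy hyW
      have hyW' : ‖y - α i * x₀‖ < 2 * R := hyW
      have hPe : Pl i y = fun t => (ee t * x₀, β i + ee t * (y - α i * x₀ - β i) + α i * (ee t * x₀)) := by
        funext t; simp only [Pl, if_pos hs]
      rw [hPe]
      have := hT.loop (γ := fun t => (ee t * x₀, β i + ee t * (y - α i * x₀ - β i) + α i * (ee t * x₀)))
        (by fun_prop) (fun _ => 1)
        (fun k => if k = i then y - α i * x₀ - β i else (α i - α k) * x₀)
        (fun k t => if k = i then 0 else (y - α i * x₀ - β i) + ee (-t) * (β i - β k))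
        (fun k => by split_ifs <;> fun_prop)
        (fun k t => by
          split_ifs with hk
          · rw [norm_zero, norm_pos_iff]
            have := hy i
            intro h0
            apply this
            linear_combination h0
          · have h1 : α i ≠ α k := fun h => hk (hs k h.symm)
            refine lt_of_le_of_lt ?_ (hsep i k h1)
            have h2 := hβ i
            have h3 := hβ k
            have h4 := norm_sub_le (y - α i * x₀) (β i)
            have h5 := norm_sub_le (β i) (β k)
            have h6 := norm_add_le (y - α i * x₀ - β i) (ee (-t) * (β i - β k))
            rw [hRi] at h6
            linarith) (fun k => by
          split_ifs
          · rfl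
          · simp [een1, ee_zero]) (fun k t => by
          simp only [Nat.cast_one, mul_one]
          split_ifs with hk
          · subst hk; ring
          · linear_combination (β k - β i) * ee_mul_neg t)
      simpa using this
    · have hχ := (hcls i).resolve_left hs
      refine ⟨_, hχ, ?_⟩
      intro y hy hyW
      have hyW' : ‖y - α i * x₀‖ < 2 * R := hyW
      have hPe : Pl i y = fun t => (ee t * x₀, (y - α i * x₀) + α i * (ee t * x₀)) := by
        funext t; simp only [Pl, if_neg hs]
      rw [hPe]
      have := hT.loop (γ := fun t => (ee t * x₀, (y - α i * x₀) + α i * (ee t * x₀)))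
        (by fun_prop) (fun k => if α k = α i then 0 else 1)
        (fun k => if α k = α i then y - α i * x₀ - β k else (α i - α k) * x₀)
        (fun k t => if α k = α i then 0 else ee (-t) * (y - α i * x₀ - β k))
        (fun k => by split_ifs <;> fun_prop)
        (fun k t => by
          split_ifs with hk
          · rw [norm_zero, norm_pos_iff]
            have := hy k
            intro h0
            apply this
            rw [hk]
            linear_combination h0
          · refine lt_of_le_of_lt ?_ (hsep i k (Ne.symm hk))
            have h3 := hβ k
            have h4 := norm_sub_le (y - α i * x₀) (β k)
            rw [hRi]
            linarith) (fun k => by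
          split_ifs
          · rfl
          · simp [een1, ee_zero]) (fun k t => by
          split_ifs with hk
          · simp only [hk, Nat.cast_zero, mul_zero, ee_zero]; ring
          · simp only [Nat.cast_one, mul_one]
            linear_combination (-(y - α i * x₀ - β k)) * ee_mul_neg t)
      have hcard : ∑ k, (if α k = α i then 0 else 1) = Nat.card {k // α k ≠ α i} := by
        rw [Nat.card_eq_fintype_card, Fintype.card_subtype, Finset.card_filter]
        refine Finset.sum_congr rfl fun k _ => ?_
        by_cases h : α k = α i <;> simp [h]
      rw [hcard] at this
      exact this
  -- agreement on overlaps
  have hagree : ∀ y ∈ Fib α β x₀, y ∈ Winf → ∀ i, y ∈ Wl i → ∀ c, T.A (Pinf y) c = c →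
      T.A (Pl i y) c = c := by
    intro y hy hyI i hyW c hc
    have hyI' : ∀ i, R < ‖y - α i * x₀‖ := hyI
    have hyW' : ‖y - α i * x₀‖ < 2 * R := hyW
    by_cases hs : single i
    · have hPe : Pl i y = fun t => (ee t * x₀, β i + ee t * (y - α i * x₀ - β i) + α i * (ee t * x₀)) := by
        funext t; simp only [Pl, if_pos hs]
      have hh := T.homotopy (a := (x₀, y)) (b := (x₀, y)) (fun t s => (ee t * x₀, (s:ℂ) * β i + ee t * (y - α i * x₀ - (s:ℂ) * β i)
        + α i * (ee t * x₀))) (by fun_prop) (by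
          intro t ht s hs' k hk
          have e1 : ee t * ((α i - α k) * x₀) = β k - (s:ℂ) * β i - ee t * (y - α i * x₀ - (s:ℂ) * β i) := by
            simp only at hk
            linear_combination hk
          have hsn : ‖(s:ℂ) * β i‖ ≤ ‖β i‖ := by
            rw [norm_mul, Complex.norm_real, Real.norm_of_nonneg hs'.1]
            exact mul_le_of_le_one_left (norm_nonneg _) hs'.2
          by_cases hki : k = i
          · subst hki
            have e2 : ee t * (y - α k * x₀) = ((1 - s : ℝ):ℂ) * β k + ee t * ((s:ℂ) * β k) := by
              push_cast
              linear_combination e1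
            have e3 := congrArg norm e2
            rw [hRi] at e3
            have e4 := norm_add_le (((1 - s : ℝ):ℂ) * β k) (ee t * ((s:ℂ) * β k))
            rw [hRi, norm_mul, norm_mul, Complex.norm_real, Complex.norm_real,
              Real.norm_of_nonneg hs'.1, Real.norm_of_nonneg (by linarith [hs'.2])] at e4
            have := hβ k
            have := hyI' k
            nlinarith
          · have h1 : α i ≠ α k := fun h => hki (hs k h.symm)
            have h7 := hsep i k h1
            have e3 := congrArg norm e1
            rw [hRi] at e3
            rw [e3] at h7
            have h2 := hβ i
            have h3 := hβ k
            have h4 := norm_sub_le (y - α i * x₀) ((s:ℂ) * β i)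
            have h5 := norm_sub_le (β k) ((s:ℂ) * β i)
            have h6 := norm_sub_le (β k - (s:ℂ) * β i) (ee t * (y - α i * x₀ - (s:ℂ) * β i))
            rw [hRi] at h6
            linarith) (fun s => by simp [ee_zero]) (fun s => by simp [ee_one])
      have e0 : (fun t => (ee t * x₀, ((0:ℝ):ℂ) * β i + ee t * (y - α i * x₀ - ((0:ℝ):ℂ) * β i)
        + α i * (ee t * x₀))) = Pinf y := by
        funext t; simp only [Pinf, Prod.mk.injEq, true_and]; push_cast; ring
      have e1 : (fun t => (ee t * x₀, ((1:ℝ):ℂ) * β i + ee t * (y - α i * x₀ - ((1:ℝ):ℂ) * β i)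
        + α i * (ee t * x₀))) = Pl i y := by
        rw [hPe]
        funext t; simp only [Prod.mk.injEq, true_and]; push_cast; ring
      rw [e0, e1] at hh
      rw [← hh]; exact hc
    · have hPe : Pl i y = fun t => (ee t * x₀, (y - α i * x₀) + α i * (ee t * x₀)) := by
        funext t; simp only [Pl, if_neg hs]
      have hsq := T.sq (fun s t => (ee (s + t) * x₀, ee s * (y - α i * x₀) + α i * (ee (s + t) * x₀)))
        (by fun_prop) (by
          intro s _ t _ k hk
          have e1 : ee (s + t) * ((α i - α k) * x₀) + ee s * (y - α i * x₀) = β k := by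
            simp only at hk
            linear_combination hk
          by_cases hki : α i = α k
          · have h1 : ee s * (y - α i * x₀) = β k := by
              rw [← e1, hki]; ring
            have h2 := congrArg norm h1
            rw [hRi] at h2
            have := hβ k
            have := hyI' i
            linarith
          · have h7 := hsep i k hki
            have e2 : ee (s + t) * ((α i - α k) * x₀) = β k - ee s * (y - α i * x₀) := by
              linear_combination e1
            have e3 := congrArg norm e2
            rw [hRi] at e3
            rw [e3] at h7
            have h6 := norm_sub_le (β k) (ee s * (y - α i * x₀))
            rw [hRi] at h6
            have h3 := hβ k
            linarith)
      have ee1 : ∀ t, ee (1 + t) = ee t := fun t => by rw [ee_add, ee_one, one_mul]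
      have ee1' : ∀ t, ee (t + 1) = ee t := fun t => by rw [ee_add, ee_one, mul_one]
      have f0 : (fun s => (ee (s + 0) * x₀, ee s * (y - α i * x₀) + α i * (ee (s + 0) * x₀))) = Pinf y := by
        funext t; simp only [Pinf, add_zero, Prod.mk.injEq, true_and]; ring
      have f1 : (fun s => (ee (s + 1) * x₀, ee s * (y - α i * x₀) + α i * (ee (s + 1) * x₀))) = Pinf y := by
        funext t; simp only [Pinf, ee1', Prod.mk.injEq, true_and]; ring
      have g0 : (fun t => (ee (0 + t) * x₀, ee 0 * (y - α i * x₀) + α i * (ee (0 + t) * x₀))) = Pl i y := by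
        rw [hPe]; funext t; simp only [zero_add, ee_zero, one_mul]
      have g1 : (fun t => (ee (1 + t) * x₀, ee 1 * (y - α i * x₀) + α i * (ee (1 + t) * x₀))) = Pl i y := by
        rw [hPe]; funext t; simp only [ee1, ee_one, one_mul]
      rw [f0, f1, g0, g1] at hsq
      obtain ⟨c₀, h1, h2⟩ := fix_exists (hPinf y hyI).2 hinf
      have h3 := congrArg (fun g : Equiv.Perm ℂ => g c) hsq
      simp only [Equiv.Perm.mul_apply] at h3
      rw [hc] at h3
      rw [h2 _ h3, h2 _ hc]
  -- existence of common fixed points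
  have hex : ∀ y, ∃ c, y ∈ Fib α β x₀ → (y ∈ Winf → T.A (Pinf y) c = c) ∧
      ∀ i, y ∈ Wl i → T.A (Pl i y) c = c := by
    intro y
    by_cases hy : y ∈ Fib α β x₀
    swap
    · exact ⟨0, fun h => absurd h hy⟩
    by_cases hyI : y ∈ Winf
    · obtain ⟨c, h1, h2⟩ := fix_exists (hPinf y hyI).2 hinf
      exact ⟨c, fun _ => ⟨fun _ => h1, fun i hi => hagree y hy hyI i hi c h1⟩⟩
    · have : ∃ i, ‖y - α i * x₀‖ ≤ R := by
        simpa [Winf] using hyI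
      obtain ⟨i, hi⟩ := this
      have hiW : y ∈ Wl i := by
        change ‖y - α i * x₀‖ < 2 * R
        linarith
      obtain ⟨χ, hχ, h⟩ := hPl i
      obtain ⟨c, h1, h2⟩ := fix_exists (h y hy hiW).2 hχ
      refine ⟨c, fun _ => ⟨fun h => absurd h hyI, fun k hk => ?_⟩⟩
      have hk' : ‖y - α k * x₀‖ < 2 * R := hk
      have hαk : α k = α i := by
        by_contra hne
        have h3 := hsep k i hne
        have : (α k - α i) * x₀ = (y - α i * x₀) - (y - α k * x₀) := by ring
        rw [this] at h3
        have := norm_sub_le (y - α i * x₀) (y - α k * x₀)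
        linarith
      have hPP : Pl k y = Pl i y := by
        by_cases hs : single i
        · rw [hs k hαk]
        · have hs' : ¬ single k := by
            intro hs'
            have := hs' i hαk.symm
            subst this
            exact hs hs'
          funext t
          simp only [Pl, if_neg hs, if_neg hs', hαk]
      rw [hPP]; exact h1
  choose f hf using hex
  let T' : Transport (Fib α β x₀) (Equiv.Perm ℂ) :=
    T.comap (fun y => (x₀, y)) (by fun_prop) (Fib α β x₀) (fun y hy => hy)
  refine ⟨f, ?_⟩
  change T'.Flat (Fib α β x₀) f
  refine T'.flat_of_local Subset.rfl ?_
  intro q hq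
  have hPic : Continuous (fun p : ℂ × ℝ => Pinf p.1 p.2) := by fun_prop
  by_cases hqI : q ∈ Winf
  · have hopen : IsOpen Winf := by
      have : Winf = ⋂ i, {y | R < ‖y - α i * x₀‖} := by ext; simp [Winf]
      rw [this]
      exact isOpen_iInter_of_finite fun i => isOpen_lt (by fun_prop) (by fun_prop)
    refine ⟨Winf, hopen.mem_nhds hqI, ?_⟩
    intro r hr
    refine T.flat_loops (Winf ∩ Fib α β x₀) (fun y => (x₀, y)) Pinf hPic (fun y => by simp [Pinf, ee_zero])
      (fun y => by simp [Pinf, ee_one]) (fun y hy => (hPinf y hy.1).1.2) f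
      (fun y hy => (hf y hy.2).1 hy.1) (fun y hy c hc => ?_) r hr
    obtain ⟨c₀, h1, h2⟩ := fix_exists (hPinf y hy.1).2 hinf
    rw [h2 _ hc, h2 _ ((hf y hy.2).1 hy.1)]
  · have : ∃ i, ‖q - α i * x₀‖ ≤ R := by
      simpa [Winf] using hqI
    obtain ⟨i, hi⟩ := this
    have hiW : q ∈ Wl i := by
      change ‖q - α i * x₀‖ < 2 * R
      linarith
    have hopen : IsOpen (Wl i) := isOpen_lt (by fun_prop) (by fun_prop)
    refine ⟨Wl i, hopen.mem_nhds hiW, ?_⟩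
    obtain ⟨χ, hχ, h⟩ := hPl i
    intro r hr
    refine T.flat_loops (Wl i ∩ Fib α β x₀) (fun y => (x₀, y)) (Pl i) (hPlc i)
      (fun y => by by_cases hs : single i <;> simp [Pl, hs, ee_zero])
      (fun y => by by_cases hs : single i <;> simp [Pl, hs, ee_one])
      (fun y hy => (h y hy.2 hy.1).1.2) f
      (fun y hy => (hf y hy.2).2 i hy.1) (fun y hy c hc => ?_) r hr
    obtain ⟨c₀, h1, h2⟩ := fix_exists (h y hy.2 hy.1).2 hχ
    rw [h2 _ hc, h2 _ ((hf y hy.2).2 i hy.1)]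

theorem exists_generic (hd : ∀ i k, i ≠ k → α i = α k → β i ≠ β k) :
    ∃ R : ℝ, 0 < R ∧ (∀ i, ‖β i‖ < R) ∧ ∃ x₀ : ℂ, x₀ ∉ BSet α β ∧
      ∀ i k, α i ≠ α k → 5 * R < ‖(α i - α k) * x₀‖ := by
  have hR : ∀ i, ‖β i‖ < CC α β := fun i => by
    have := CC_ge α β i
    have := norm_nonneg (α i)
    linarith
  have hC := CC_ge_one α β
  refine ⟨CC α β, by linarith, hR, ?_⟩
  set R := CC α β
  let N : ℝ := 1 + ∑ p : ι × ι, 5 * R / ‖α p.1 - α p.2‖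
  have hN : ∀ i k, α i ≠ α k → 5 * R < ‖(α i - α k) * (N:ℂ)‖ := by
    intro i k hik
    have h0 : 0 < ‖α i - α k‖ := norm_pos_iff.2 (sub_ne_zero.2 hik)
    have h1 : 5 * R / ‖α i - α k‖ < N := by
      have := Finset.single_le_sum (f := fun p : ι × ι => 5 * R / ‖α p.1 - α p.2‖)
        (fun p _ => by positivity) (Finset.mem_univ (i, k))
      simp only at this
      simp only [N]
      linarith
    rw [norm_mul, Complex.norm_real]
    rw [div_lt_iff₀ h0] at h1
    have := le_abs_self N
    rw [Real.norm_eq_abs]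
    nlinarith
  refine ⟨N, ?_, hN⟩
  rintro ⟨i, k, hik, h⟩
  by_cases hα : α i = α k
  · apply hd i k hik hα
    rw [hα] at h
    exact add_left_cancel h
  · have h1 := hN i k hα
    have h2 : (α i - α k) * (N:ℂ) = β k - β i := by linear_combination h
    rw [h2] at h1
    have := norm_sub_le (β k) (β i)
    linarith [hR i, hR k]

theorem nontriv_ext (hT : AffT T κ) (hd : ∀ i k, i ≠ k → α i = α k → β i ≠ β k)
    (hinf : Complex.exp (κ * (2 * Real.pi * Complex.I * (Fintype.card ι : ℕ))) ≠ 1)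
    (hcls : ∀ i, (∀ k, α k = α i → k = i) ∨
      Complex.exp (κ * (2 * Real.pi * Complex.I * (Nat.card {k // α k ≠ α i} : ℕ))) ≠ 1) :
    ∃ f, T.Flat (XSet α β) f := by
  obtain ⟨R, hR, hβ, x₀, hx₀, hsep⟩ := exists_generic hd
  obtain ⟨f₀, hf₀⟩ := nontriv_flat hT hβ hsep hR hinf hcls
  exact ext_flat T hx₀ hf₀

end nontriv
end Milnor

end

section
open Set Topology
set_option linter.unusedSectionVars false
namespace Milnor
section triv

/-- A transport by translations. -/
def TrT {E : Type*} [TopologicalSpace E] {X : Set E} (T : Transport X (Equiv.Perm ℂ)) : Prop :=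
  ∀ γ, Curve X γ → ∀ c, T.A γ c = T.A γ 0 + c

variable {S : Finset ℂ} {T : Transport ((S : Set ℂ)ᶜ) (Equiv.Perm ℂ)}

theorem TrT.diff (hT : TrT T) {W : Set ℂ} (hW : W ⊆ (S : Set ℂ)ᶜ) {f : ℂ → ℂ} (hf : T.Flat W f)
    {γ : ℝ → ℂ} (hγ : Curve W γ) : T.A γ 0 = f (γ 0) - f (γ 1) := by
  have := hf γ hγ
  rw [hT γ (hγ.mono hW)] at this
  linear_combination this

theorem TrT.flat_add (hT : TrT T) {W : Set ℂ} (hW : W ⊆ (S : Set ℂ)ᶜ) {f : ℂ → ℂ} (hf : T.Flat W f)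
    (k : ℂ) : T.Flat W (fun z => f z + k) := by
  intro γ hγ
  have := hT.diff hW hf hγ
  rw [hT γ (hγ.mono hW), this]
  ring

theorem TrT.const_diff (hT : TrT T) {W : Set ℂ} (hW : W ⊆ (S : Set ℂ)ᶜ) (hc : Convex ℝ W)
    {f g : ℂ → ℂ} (hf : T.Flat W f) (hg : T.Flat W g) {p q : ℂ} (hp : p ∈ W) (hq : q ∈ W) :
    f p - g p = f q - g q := by
  have hγ : Curve W (fun t : ℝ => p + t • (q - p)) := by
    refine ⟨by fun_prop, fun t ht => ?_⟩
    have := hc hp hq (a := 1 - t) (b := t) (by linarith [ht.2]) ht.1 (by ring)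
    convert this using 1
    module
  have h1 := hT.diff hW hf hγ
  have h2 := hT.diff hW hg hγ
  simp only [zero_smul, add_zero, one_smul, add_sub_cancel] at h1 h2
  rw [h1] at h2
  linear_combination h2

theorem TrT.glue (hT : TrT T) {K : Set ℂ} {U V : Set ℂ} (hU : IsOpen U) (hV : IsOpen V)
    (hK : K \ S ⊆ U ∪ V) {f g : ℂ → ℂ}
    (hf : T.Flat (U ∩ (K \ S)) f) (hg : T.Flat (V ∩ (K \ S)) g) {p : ℂ}
    (hd : ∀ x ∈ U ∩ V ∩ (K \ S), f x - g x = f p - g p) :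
    ∃ h, T.Flat (K \ S) h := by
  have hKS : K \ S ⊆ ((S : Set ℂ)ᶜ : Set ℂ) := fun x hx => hx.2
  refine T.flat_union (K \ S) hKS hU hV hK hf
    (hT.flat_add (fun x hx => hKS hx.2) hg (f p - g p)) ?_
  intro x hx hxU hxV
  rw [← hd x ⟨⟨hxU, hxV⟩, hx⟩]
  ring

/-- the circle around `s` of radius `ε` starting at the bottom -/
noncomputable def circ (s : ℂ) (ε : ℝ) (t : ℝ) : ℂ := s - Complex.I * ε * ee t

theorem continuous_circ (s : ℂ) (ε : ℝ) : Continuous (circ s ε) := by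
  have := continuous_ee
  unfold circ; fun_prop

theorem circ_norm (s : ℂ) (ε : ℝ) (t : ℝ) : ‖circ s ε t - s‖ = |ε| := by
  simp [circ, norm_ee]

theorem ee_eq (t : ℝ) : ee t = (Real.cos (2 * Real.pi * t) : ℂ) + (Real.sin (2 * Real.pi * t) : ℂ) * Complex.I := by
  unfold ee
  rw [show (2 * Real.pi * Complex.I * t : ℂ) = ((2 * Real.pi * t : ℝ) : ℂ) * Complex.I by push_cast; ring,
    Complex.exp_mul_I]
  push_cast; rfl

theorem circ_re (s : ℂ) (ε : ℝ) (t : ℝ) : (circ s ε t).re = s.re + ε * Real.sin (2 * Real.pi * t) := by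
  rw [circ, ee_eq]
  simp [-Complex.ofReal_cos, -Complex.ofReal_sin]

theorem circ_im (s : ℂ) (ε : ℝ) (t : ℝ) : (circ s ε t).im = s.im - ε * Real.cos (2 * Real.pi * t) := by
  rw [circ, ee_eq]
  simp [-Complex.ofReal_cos, -Complex.ofReal_sin]

theorem circ_shrink (T : Transport ((S : Set ℂ)ᶜ) (Equiv.Perm ℂ)) {s : ℂ} {ε ρ : ℝ} (hρ : 0 < ρ)
    (hρε : ρ ≤ ε)
    (hS : ∀ z ∈ S, ‖z - s‖ ≤ ε → z = s) (h1 : T.A (circ s ε) = 1) : T.A (circ s ρ) = 1 := by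
  have hee := continuous_ee
  have hmem : ∀ t, ∀ σ ∈ Icc (0:ℝ) 1, circ s (ε + σ * (ρ - ε)) t ∈ ((S : Set ℂ)ᶜ) := by
    intro t σ hσ hz
    have hn := circ_norm s (ε + σ * (ρ - ε)) t
    have h2 : 0 < ε + σ * (ρ - ε) := by nlinarith [hσ.1, hσ.2]
    have h3 : ε + σ * (ρ - ε) ≤ ε := by nlinarith [hσ.1, hσ.2]
    rw [abs_of_pos h2] at hn
    have := hS _ hz (by rw [hn]; exact h3)
    rw [this] at hn
    simp at hn
    linarith
  have hsq := T.sq (fun t σ => circ s (ε + σ * (ρ - ε)) t) (by unfold circ; fun_prop)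
    (fun t _ σ hσ => hmem t σ hσ)
  have e0 : (fun t => circ s (ε + 0 * (ρ - ε)) t) = circ s ε := by funext t; simp
  have e1 : (fun t => circ s (ε + 1 * (ρ - ε)) t) = circ s ρ := by funext t; simp
  have e2 : (fun σ : ℝ => circ s (ε + σ * (ρ - ε)) 1) = fun σ => circ s (ε + σ * (ρ - ε)) 0 := by
    funext σ; simp [circ, ee_zero, ee_one]
  rw [e0, e1, h1, e2, one_mul] at hsq
  exact mul_eq_left.1 hsq.symm

theorem one_point (hT : TrT T) {K : Set ℂ} (hKo : IsOpen K) (hKc : Convex ℝ K) {s : ℂ}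
    (hsK : s ∈ K) (hKS : ∀ z ∈ S, z ∈ K → z = s) (hs : s ∈ S) {ε : ℝ} (hε : 0 < ε)
    (hS : ∀ z ∈ S, ‖z - s‖ ≤ ε → z = s) (h1 : T.A (circ s ε) = 1) :
    ∃ f, T.Flat (K \ S) f := by
  obtain ⟨ρ, hρ0, hρε, hρK⟩ : ∃ ρ : ℝ, 0 < ρ ∧ ρ ≤ ε ∧ ∀ z, ‖z - s‖ ≤ ρ → z ∈ K := by
    obtain ⟨δ, hδ, hb⟩ := Metric.isOpen_iff.1 hKo s hsK
    refine ⟨min ε (δ / 2), by positivity, min_le_left _ _, fun z hz => hb ?_⟩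
    rw [Metric.mem_ball, dist_eq_norm]
    have := min_le_right ε (δ / 2)
    linarith
  have hA := circ_shrink T hρ0 hρε hS h1
  let U : Set ℂ := {z | z.re ≠ s.re} ∪ {z | z.im < s.im}
  let V : Set ℂ := {z | z.re ≠ s.re} ∪ {z | s.im < z.im}
  have hUo : IsOpen U := (isOpen_ne_fun (by fun_prop) (by fun_prop)).union
    (isOpen_lt (by fun_prop) (by fun_prop))
  have hVo : IsOpen V := (isOpen_ne_fun (by fun_prop) (by fun_prop)).union
    (isOpen_lt (by fun_prop) (by fun_prop))
  have hKX : K \ S ⊆ ((S : Set ℂ)ᶜ : Set ℂ) := fun x hx => hx.2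
  have hUS : ∀ z ∈ K, z ∈ U → z ∈ K \ S := by
    intro z hz hzU
    refine ⟨hz, fun hzS => ?_⟩
    have := hKS z hzS hz
    subst this
    rcases hzU with h | h
    · exact h rfl
    · exact lt_irrefl z.im h
  have hVS : ∀ z ∈ K, z ∈ V → z ∈ K \ S := by
    intro z hz hzU
    refine ⟨hz, fun hzS => ?_⟩
    have := hKS z hzS hz
    subst this
    rcases hzU with h | h
    · exact h rfl
    · exact lt_irrefl z.im h
  have hseg : ∀ z ∈ K, ∀ c ∈ K, ∀ t ∈ Icc (0:ℝ) 1, z + t • (c - z) ∈ K := by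
    intro z hz c hc t ht
    have := hKc hz hc (a := 1 - t) (b := t) (by linarith [ht.2]) ht.1 (by ring)
    convert this using 1
    module
  have hf := T.flat_star (K := U ∩ (K \ S)) (fun x hx => hKX hx.2) (c := s - ρ * Complex.I) (by
    intro z hz t ht
    have hK' : z + t • (s - ρ * Complex.I - z) ∈ K := hseg z hz.2.1 _ (hρK _ (by simp [abs_of_pos hρ0])) t ht
    have hU' : z + t • (s - ρ * Complex.I - z) ∈ U := by
      rcases eq_or_lt_of_le ht.2 with rfl | ht1
      · right; simp [hρ0]
      rcases hz.1 with h | h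
      · left
        intro h'
        simp at h'
        apply h
        have : (1 - t) * (z.re - s.re) = 0 := by linear_combination h'
        rcases mul_eq_zero.1 this with h | h <;> linarith
      · right
        simp only [mem_ofPred_eq] at h ⊢
        simp
        nlinarith [ht.1]
    exact ⟨hU', hUS _ hK' hU'⟩) 0
  have hg := T.flat_star (K := V ∩ (K \ S)) (fun x hx => hKX hx.2) (c := s + ρ * Complex.I) (by
    intro z hz t ht
    have hK' : z + t • (s + ρ * Complex.I - z) ∈ K := hseg z hz.2.1 _ (hρK _ (by simp [abs_of_pos hρ0])) t ht
    have hU' : z + t • (s + ρ * Complex.I - z) ∈ V := by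
      rcases eq_or_lt_of_le ht.2 with rfl | ht1
      · right; simp [hρ0]
      rcases hz.1 with h | h
      · left
        intro h'
        simp at h'
        apply h
        have : (1 - t) * (z.re - s.re) = 0 := by linear_combination h'
        rcases mul_eq_zero.1 this with h | h <;> linarith
      · right
        simp only [mem_ofPred_eq] at h ⊢
        simp
        nlinarith [ht.1]
    exact ⟨hU', hVS _ hK' hU'⟩) 0
  generalize (fun q : ℂ => T.A (fun t : ℝ => q + t • (s - ρ * Complex.I - q)) 0) = f at hf
  generalize (fun q : ℂ => T.A (fun t : ℝ => q + t • (s + ρ * Complex.I - q)) 0) = g at hg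
  have hWU : U ∩ (K \ S) ⊆ ((S : Set ℂ)ᶜ : Set ℂ) := fun x hx => hKX hx.2
  have hWV : V ∩ (K \ S) ⊆ ((S : Set ℂ)ᶜ : Set ℂ) := fun x hx => hKX hx.2
  -- the circle
  have hcc := continuous_circ s ρ
  have hcK : ∀ t, circ s ρ t ∈ K := fun t => hρK _ (by rw [circ_norm, abs_of_pos hρ0])
  have hcX : Curve ((S : Set ℂ)ᶜ) (circ s ρ) := by
    refine ⟨hcc, fun t _ hz => ?_⟩
    have := hKS _ hz (hcK t)
    have h2 := circ_norm s ρ t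
    rw [this, abs_of_pos hρ0] at h2
    simp at h2
    linarith
  have hpi := Real.pi_pos
  have d1 := hT.diff hWU hf (γ := fun t => circ s ρ (0 + (1/4 - 0) * t)) ⟨by fun_prop, by
    intro t ht
    have : circ s ρ (0 + (1/4 - 0) * t) ∈ U := by
      rcases eq_or_lt_of_le ht.2 with rfl | ht1
      · left
        simp only [mem_ofPred_eq, circ_re]
        rw [show 2 * Real.pi * (0 + (1 / 4 - 0) * 1) = Real.pi / 2 by ring, Real.sin_pi_div_two]
        simp [hρ0.ne']
      · right
        simp only [mem_ofPred_eq, circ_im]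
        have : 0 < Real.cos (2 * Real.pi * (0 + (1 / 4 - 0) * t)) :=
          Real.cos_pos_of_mem_Ioo ⟨by nlinarith [ht.1], by nlinarith⟩
        nlinarith
    exact ⟨this, hUS _ (hcK _) this⟩⟩
  have d2 := hT.diff hWV hg (γ := fun t => circ s ρ (1/4 + (3/4 - 1/4) * t)) ⟨by fun_prop, by
    intro t ht
    have : circ s ρ (1/4 + (3/4 - 1/4) * t) ∈ V := by
      rcases eq_or_lt_of_le ht.2 with rfl | ht1
      · left
        simp only [mem_ofPred_eq, circ_re]
        rw [show 2 * Real.pi * (1/4 + (3/4 - 1/4) * 1) = Real.pi / 2 + Real.pi by ring, Real.sin_add_pi,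
          Real.sin_pi_div_two]
        simp [hρ0.ne']
      rcases eq_or_lt_of_le ht.1 with rfl | ht0
      · left
        simp only [mem_ofPred_eq, circ_re]
        rw [show 2 * Real.pi * (1/4 + (3/4 - 1/4) * 0) = Real.pi / 2 by ring, Real.sin_pi_div_two]
        simp [hρ0.ne']
      · right
        simp only [mem_ofPred_eq, circ_im]
        have : Real.cos (2 * Real.pi * (1/4 + (3/4 - 1/4) * t)) < 0 :=
          Real.cos_neg_of_pi_div_two_lt_of_lt (by nlinarith) (by nlinarith)
        nlinarith
    exact ⟨this, hVS _ (hcK _) this⟩⟩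
  have d3 := hT.diff hWU hf (γ := fun t => circ s ρ (3/4 + (1 - 3/4) * t)) ⟨by fun_prop, by
    intro t ht
    have : circ s ρ (3/4 + (1 - 3/4) * t) ∈ U := by
      rcases eq_or_lt_of_le ht.1 with rfl | ht0
      · left
        simp only [mem_ofPred_eq, circ_re]
        rw [show 2 * Real.pi * (3/4 + (1 - 3/4) * 0) = Real.pi / 2 + Real.pi by ring, Real.sin_add_pi,
          Real.sin_pi_div_two]
        simp [hρ0.ne']
      · right
        simp only [mem_ofPred_eq, circ_im]
        have : 0 < Real.cos (2 * Real.pi * (3/4 + (1 - 3/4) * t)) := by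
          rw [← Real.cos_sub_two_pi]
          exact Real.cos_pos_of_mem_Ioo ⟨by nlinarith [ht.1], by nlinarith [ht.2]⟩
        nlinarith
    exact ⟨this, hUS _ (hcK _) this⟩⟩
  have s1 := T.split hcX (a := 0) (b := 1/4) (c := 3/4) le_rfl (by norm_num) (by norm_num) (by norm_num)
  have s2 := T.split hcX (a := 0) (b := 3/4) (c := 1) le_rfl (by norm_num) (by norm_num) (by norm_num)
  rw [← s1] at s2
  have s3 : (fun t => circ s ρ (0 + (1 - 0) * t)) = circ s ρ := by funext t; simp
  rw [s3, hA] at s2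
  have s4 := congrArg (fun p : Equiv.Perm ℂ => p 0) s2
  have hsub : ∀ a b : ℝ, 0 ≤ a → a ≤ b → b ≤ 1 → ∀ c, T.A (fun t => circ s ρ (a + (b - a) * t)) c =
      T.A (fun t => circ s ρ (a + (b - a) * t)) 0 + c := by
    intro a b h1 h2 h3
    apply hT
    refine ⟨by fun_prop, fun t ht => hcX.2 _ ⟨by nlinarith [ht.1], by nlinarith [ht.1, ht.2]⟩⟩
  simp only [Equiv.Perm.mul_apply, Equiv.Perm.one_apply] at s4
  rw [d3, hsub (1/4) (3/4) (by norm_num) (by norm_num) (by norm_num), d2,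
    hsub 0 (1/4) (by norm_num) (by norm_num) (by norm_num), d1] at s4
  norm_num at s4
  have s5 : circ s ρ 1 = circ s ρ 0 := by simp [circ, ee_zero, ee_one]
  rw [s5] at s4
  have key : f (circ s ρ (3/4)) - g (circ s ρ (3/4)) = f (circ s ρ (1/4)) - g (circ s ρ (1/4)) := by
    linear_combination s4
  have r1 : s.re < (circ s ρ (1/4)).re := by
    rw [circ_re, show 2 * Real.pi * (1/4) = Real.pi / 2 by ring, Real.sin_pi_div_two]
    linarith
  have r3 : (circ s ρ (3/4)).re < s.re := by
    rw [circ_re, show 2 * Real.pi * (3/4) = Real.pi / 2 + Real.pi by ring, Real.sin_add_pi,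
      Real.sin_pi_div_two]
    linarith
  refine hT.glue hUo hVo (K := K) ?_ hf hg (p := circ s ρ (1/4)) ?_
  · intro z hz
    by_cases hre : z.re = s.re
    · rcases lt_trichotomy z.im s.im with h | h | h
      · exact Or.inl (Or.inr h)
      · exact absurd (Complex.ext hre h ▸ hs) hz.2
      · exact Or.inr (Or.inr h)
    · exact Or.inl (Or.inl hre)
  · rintro z ⟨⟨hzU, hzV⟩, hzK⟩
    have hre : z.re ≠ s.re := by
      intro h0
      rcases hzU with h | h
      · exact h h0
      rcases hzV with h' | h'
      · exact h' h0
      · exact lt_asymm (show z.im < s.im from h) h'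
    rcases lt_or_gt_of_ne hre with h | h
    · rw [← key]
      have hconv : Convex ℝ (K ∩ {w : ℂ | w.re < s.re}) :=
        hKc.inter (convex_halfSpace_re_lt s.re)
      have hsub1 : K ∩ {w : ℂ | w.re < s.re} ⊆ U ∩ (K \ S) := fun w hw =>
        ⟨Or.inl (show w.re ≠ s.re from ne_of_lt hw.2), hUS w hw.1 (Or.inl (show w.re ≠ s.re from ne_of_lt hw.2))⟩
      have hsub2 : K ∩ {w : ℂ | w.re < s.re} ⊆ V ∩ (K \ S) := fun w hw =>
        ⟨Or.inl (show w.re ≠ s.re from ne_of_lt hw.2), hUS w hw.1 (Or.inl (show w.re ≠ s.re from ne_of_lt hw.2))⟩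
      exact hT.const_diff (hsub1.trans hWU) hconv (hf.mono hsub1) (hg.mono hsub2) ⟨hzK.1, h⟩ ⟨hcK _, r3⟩
    · have hconv : Convex ℝ (K ∩ {w : ℂ | s.re < w.re}) :=
        hKc.inter (convex_halfSpace_re_gt s.re)
      have hsub1 : K ∩ {w : ℂ | s.re < w.re} ⊆ U ∩ (K \ S) := fun w hw =>
        ⟨Or.inl (show w.re ≠ s.re from ne_of_gt hw.2), hUS w hw.1 (Or.inl (show w.re ≠ s.re from ne_of_gt hw.2))⟩
      have hsub2 : K ∩ {w : ℂ | s.re < w.re} ⊆ V ∩ (K \ S) := fun w hw =>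
        ⟨Or.inl (show w.re ≠ s.re from ne_of_gt hw.2), hUS w hw.1 (Or.inl (show w.re ≠ s.re from ne_of_gt hw.2))⟩
      exact hT.const_diff (hsub1.trans hWU) hconv (hf.mono hsub1) (hg.mono hsub2) ⟨hzK.1, h⟩ ⟨hcK _, r1⟩

theorem many_points (hT : TrT T)
    (hcirc : ∀ s ∈ S, ∃ ε : ℝ, 0 < ε ∧ (∀ z ∈ S, ‖z - s‖ ≤ ε → z = s) ∧ T.A (circ s ε) = 1) (n : ℕ) :
    ∀ (K : Set ℂ), IsOpen K → Convex ℝ K → ((S : Set ℂ) ∩ K).ncard ≤ n → ∃ f, T.Flat (K \ S) f := by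
  classical
  induction n with
  | zero =>
    intro K hKo hKc hn
    have hfin : ((S : Set ℂ) ∩ K).Finite := S.finite_toSet.subset inter_subset_left
    have hemp : (S : Set ℂ) ∩ K = ∅ := (Set.ncard_eq_zero hfin).1 (Nat.le_zero.1 hn)
    rcases K.eq_empty_or_nonempty with rfl | ⟨c, hc⟩
    · refine ⟨fun _ => 0, fun γ hγ => ?_⟩
      exact absurd (hγ.2 0 mem0).1 (by simp)
    have hKS : K \ S = K := by
      ext z
      refine ⟨fun h => h.1, fun h => ⟨h, fun hz => ?_⟩⟩
      have : z ∈ (S : Set ℂ) ∩ K := ⟨hz, h⟩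
      rw [hemp] at this
      exact this
    refine ⟨_, T.flat_star (K := K \ S) (fun x hx => hx.2) (c := c) ?_ 0⟩
    rw [hKS]
    intro z hz t ht
    have := hKc hz hc (a := 1 - t) (b := t) (by linarith [ht.2]) ht.1 (by ring)
    convert this using 1
    module
  | succ n ih =>
    intro K hKo hKc hn
    have hfin : ((S : Set ℂ) ∩ K).Finite := S.finite_toSet.subset inter_subset_left
    rcases ((S : Set ℂ) ∩ K).eq_empty_or_nonempty with hemp | ⟨p, hpS, hpK⟩
    · exact ih K hKo hKc (by rw [hemp]; simp)
    by_cases hone : ∀ z ∈ S, z ∈ K → z = p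
    · obtain ⟨ε, h1, h2, h3⟩ := hcirc p hpS
      exact one_point hT hKo hKc hpK hone hpS h1 h2 h3
    push Not at hone
    obtain ⟨q, hqS, hqK, hqp⟩ := hone
    let φ : ℂ →ₗ[ℝ] ℝ :=
      { toFun := fun z => (q.re - p.re) * z.re + (q.im - p.im) * z.im
        map_add' := fun x y => by simp only [Complex.add_re, Complex.add_im]; ring
        map_smul' := fun x y => by simp; ring }
    have hφe : ∀ z, φ z = (q.re - p.re) * z.re + (q.im - p.im) * z.im := fun z => rfl
    have hφc : Continuous φ := by
      change Continuous fun z : ℂ => (q.re - p.re) * z.re + (q.im - p.im) * z.im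
      fun_prop
    have hφ : φ p < φ q := by
      rw [hφe, hφe]
      have : 0 < (q.re - p.re) ^ 2 + (q.im - p.im) ^ 2 := by
        by_contra hcon
        push Not at hcon
        apply hqp
        apply Complex.ext <;> nlinarith [sq_nonneg (q.re - p.re), sq_nonneg (q.im - p.im)]
      nlinarith
    obtain ⟨b, hb, hbmin⟩ := (S.filter fun z => φ p < φ z).exists_min_image φ
      ⟨q, Finset.mem_filter.2 ⟨hqS, hφ⟩⟩
    have hb' := (Finset.mem_filter.1 hb).2
    let U : Set ℂ := {z | φ z < φ b}
    let V : Set ℂ := {z | φ p < φ z}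
    have hUo : IsOpen U := isOpen_lt hφc continuous_const
    have hVo : IsOpen V := isOpen_lt continuous_const hφc
    have hUc : Convex ℝ U := convex_halfSpace_lt φ.isLinear _
    have hVc : Convex ℝ V := convex_halfSpace_gt φ.isLinear _
    have hqU : q ∉ U := by
      have := hbmin q (Finset.mem_filter.2 ⟨hqS, hφ⟩)
      exact not_lt.2 this
    have hpV : p ∉ V := lt_irrefl (φ p)
    obtain ⟨f, hf⟩ := ih (U ∩ K) (hUo.inter hKo) (hUc.inter hKc) (by
      have : ((S : Set ℂ) ∩ (U ∩ K)).ncard < ((S : Set ℂ) ∩ K).ncard := by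
        apply Set.ncard_lt_ncard _ hfin
        refine ⟨fun z hz => ⟨hz.1, hz.2.2⟩, fun h => hqU (h ⟨hqS, hqK⟩).2.1⟩
      omega)
    obtain ⟨g, hg⟩ := ih (V ∩ K) (hVo.inter hKo) (hVc.inter hKc) (by
      have : ((S : Set ℂ) ∩ (V ∩ K)).ncard < ((S : Set ℂ) ∩ K).ncard := by
        apply Set.ncard_lt_ncard _ hfin
        refine ⟨fun z hz => ⟨hz.1, hz.2.2⟩, fun h => hpV (h ⟨hpS, hpK⟩).2.1⟩
      omega)
    rw [inter_sdiff_assoc] at hf hg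
    have hcov : K \ S ⊆ U ∪ V := by
      intro z _
      rcases lt_or_ge (φ z) (φ b) with h | h
      · exact Or.inl h
      · exact Or.inr (show φ p < φ z by linarith)
    have hW : U ∩ V ∩ K ⊆ K \ S := by
      intro z hz
      refine ⟨hz.2, fun hzS => ?_⟩
      have := hbmin z (Finset.mem_filter.2 ⟨hzS, hz.1.2⟩)
      exact not_lt.2 this hz.1.1
    by_cases hne : (U ∩ V ∩ K).Nonempty
    · obtain ⟨p', hp'⟩ := hne
      refine hT.glue hUo hVo hcov hf hg (p := p') ?_
      intro x hx
      refine hT.const_diff (W := U ∩ V ∩ K) (fun z hz => (hW hz).2) ((hUc.inter hVc).inter hKc)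
        (hf.mono fun z hz => ⟨hz.1.1, hW hz⟩) (hg.mono fun z hz => ⟨hz.1.2, hW hz⟩) ⟨hx.1, hx.2.1⟩ hp'
    · refine hT.glue hUo hVo hcov hf hg (p := 0) ?_
      intro x hx
      exact absurd ⟨x, hx.1, hx.2.1⟩ hne

/-- A transport by translations on the complement of finitely many points, trivial on small circles,
has a flat section. -/
theorem lemmaP (hT : TrT T)
    (hcirc : ∀ s ∈ S, ∃ ε : ℝ, 0 < ε ∧ (∀ z ∈ S, ‖z - s‖ ≤ ε → z = s) ∧ T.A (circ s ε) = 1) :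
    ∃ f, T.Flat ((S : Set ℂ)ᶜ) f := by
  obtain ⟨f, hf⟩ := many_points hT hcirc _ univ isOpen_univ convex_univ le_rfl
  refine ⟨f, hf.mono fun z hz => ⟨mem_univ _, hz⟩⟩

end triv

section triv2
variable {ι : Type*} [Fintype ι] {α β : ι → ℂ} {T : Transport (XSet α β) (Equiv.Perm ℂ)}

/-- A separating radius for the points of the generic fiber. -/
def Sep (α β : ι → ℂ) (x₀ : ℂ) (ε : ℝ) : Prop :=
  0 < ε ∧ ∀ i k, ‖(α k * x₀ + β k) - (α i * x₀ + β i)‖ ≤ ε → k = i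

theorem exists_sep {x₀ : ℂ} (hx₀ : x₀ ∉ BSet α β) : ∃ ε, Sep α β x₀ ε := by
  classical
  have h : ∀ p : ι × ι, ∃ ε : ℝ, 0 < ε ∧ (‖(α p.2 * x₀ + β p.2) - (α p.1 * x₀ + β p.1)‖ ≤ ε → p.2 = p.1) := by
    rintro ⟨i, k⟩
    by_cases hik : k = i
    · exact ⟨1, one_pos, fun _ => hik⟩
    · have : 0 < ‖(α k * x₀ + β k) - (α i * x₀ + β i)‖ := by
        rw [norm_pos_iff, sub_ne_zero]
        exact fun h => hx₀ ⟨k, i, hik, h⟩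
      exact ⟨‖(α k * x₀ + β k) - (α i * x₀ + β i)‖ / 2, by positivity, fun h => by
        simp only at h; linarith⟩
  choose e he0 he using h
  rcases isEmpty_or_nonempty ι with h | h
  · exact ⟨1, one_pos, fun i => h.elim i⟩
  · obtain ⟨p, hp⟩ := Finite.exists_min e
    exact ⟨e p, he0 p, fun i k h => he (i, k) (h.trans (hp _))⟩

theorem triv_ext (hT : TrT T) {x₀ : ℂ} (hx₀ : x₀ ∉ BSet α β) {ε : ℝ} (hε : Sep α β x₀ ε)
    (hcirc : ∀ i, T.A (fun t => (x₀, circ (α i * x₀ + β i) ε t)) 0 = 0) :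
    ∃ f, T.Flat (XSet α β) f := by
  classical
  let S : Finset ℂ := Finset.univ.image fun i => α i * x₀ + β i
  have hS : ∀ y, y ∈ S ↔ ∃ i, α i * x₀ + β i = y := by simp [S]
  have hSX : ∀ y ∈ ((S : Set ℂ)ᶜ), (x₀, y) ∈ XSet α β := by
    intro y hy i h
    exact hy ((hS y).2 ⟨i, h.symm⟩)
  let T' : Transport ((S : Set ℂ)ᶜ) (Equiv.Perm ℂ) :=
    T.comap (fun y => (x₀, y)) (by fun_prop) _ hSX
  have hT' : TrT T' := by
    intro γ hγ c
    have h1 := hγ.1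
    exact hT _ ⟨by fun_prop, fun t ht => hSX _ (hγ.2 t ht)⟩ c
  obtain ⟨f₀, hf₀⟩ := lemmaP hT' (by
    intro s hs
    obtain ⟨i, rfl⟩ := (hS s).1 hs
    refine ⟨ε, hε.1, ?_, ?_⟩
    · intro z hz hn
      obtain ⟨k, rfl⟩ := (hS z).1 hz
      rw [hε.2 i k hn]
    · ext1 c
      have hc := continuous_circ (α i * x₀ + β i) ε
      have := hT (fun t => (x₀, circ (α i * x₀ + β i) ε t)) ⟨by fun_prop, by
        intro t ht k hk
        have h1 := circ_norm (α i * x₀ + β i) ε t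
        simp only at hk
        have h2 : k = i := by
          apply hε.2 i k
          rw [← hk, h1, abs_of_pos hε.1]
        rw [hk, h2, abs_of_pos hε.1] at h1
        simp at h1
        linarith [hε.1]⟩ c
      rw [hcirc, zero_add] at this
      exact this)
  refine ext_flat T hx₀ (f₀ := f₀) ?_
  intro r hr
  apply hf₀ r ⟨hr.1, fun t ht hz => ?_⟩
  obtain ⟨i, hi⟩ := (hS _).1 hz
  exact hr.2 t ht i hi.symm

end triv2
end Milnor

end

section
open Set Topology
set_option linter.unusedSectionVars false
namespace Milnor
section logs

/-- clamping to the unit interval -/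
noncomputable def cl (t : ℝ) : ℝ := max 0 (min 1 t)

theorem continuous_cl : Continuous cl := by unfold cl; fun_prop
theorem cl_mem (t : ℝ) : cl t ∈ Icc (0:ℝ) 1 :=
  ⟨le_max_left _ _, max_le zero_le_one (min_le_left _ _)⟩
theorem cl_eq {t : ℝ} (ht : t ∈ Icc (0:ℝ) 1) : cl t = t := by
  unfold cl; rw [min_eq_right ht.2, max_eq_right ht.1]

theorem log_lift2 (g : ℝ → ℝ → ℂ) (hg : Continuous fun p : ℝ × ℝ => g p.1 p.2)
    (hne : ∀ s ∈ Icc (0:ℝ) 1, ∀ t ∈ Icc (0:ℝ) 1, g s t ≠ 0) :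
    ∃ U : ℝ → ℝ → ℂ, (Continuous fun p : ℝ × ℝ => U p.1 p.2) ∧
      ∀ s ∈ Icc (0:ℝ) 1, ∀ t ∈ Icc (0:ℝ) 1, Complex.exp (U s t) = g s t := by
  have hcl := continuous_cl
  let f : C(ℝ × ℝ, ℂ) := ⟨fun p => g (cl p.1) (cl p.2),
    hg.comp (f := fun p : ℝ × ℝ => (cl p.1, cl p.2)) (by fun_prop)⟩
  have hf : ∀ a, f a ∈ ({0}ᶜ : Set ℂ) := fun a => hne _ (cl_mem _) _ (cl_mem _)
  obtain ⟨F, ⟨-, hF⟩, -⟩ := Complex.isCoveringMapOn_exp.existsUnique_continuousMap_lifts f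
    (a₀ := (0, 0)) (e₀ := Complex.log (f (0, 0))) (Complex.exp_log (hf _)) hf
  refine ⟨fun s t => F (s, t), F.continuous, fun s hs t ht => ?_⟩
  have := congrFun hF (s, t)
  simpa [f, cl_eq hs, cl_eq ht] using this

theorem log_lift1 (g : ℝ → ℂ) (hg : Continuous g) (hne : ∀ s ∈ Icc (0:ℝ) 1, g s ≠ 0) :
    ∃ u : ℝ → ℂ, Continuous u ∧ ∀ s ∈ Icc (0:ℝ) 1, Complex.exp (u s) = g s := by
  obtain ⟨U, hU, h⟩ := log_lift2 (fun s _ => g s) (by fun_prop) (fun s hs _ _ => hne s hs)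
  exact ⟨fun s => U s 0, hU.comp (f := fun s : ℝ => (s, (0:ℝ))) (by fun_prop), fun s hs => h s hs 0 mem0⟩

theorem log_unique {u v : ℝ → ℂ} (hu : Continuous u) (hv : Continuous v)
    (h : ∀ s ∈ Icc (0:ℝ) 1, Complex.exp (u s) = Complex.exp (v s)) :
    ∀ s ∈ Icc (0:ℝ) 1, u s - v s = u 0 - v 0 := by
  have hcl := continuous_cl
  let f : C(ℝ, ℂ) := ⟨fun s => Complex.exp (u (cl s)), by fun_prop⟩
  have hf : ∀ a, f a ∈ ({0}ᶜ : Set ℂ) := fun a => Complex.exp_ne_zero _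
  have h0 : Complex.exp (u 0 - v 0) = 1 := by
    rw [Complex.exp_sub, h 0 mem0, div_self (Complex.exp_ne_zero _)]
  obtain ⟨F, -, hF⟩ := Complex.isCoveringMapOn_exp.existsUnique_continuousMap_lifts f
    (a₀ := 0) (e₀ := u (cl 0)) rfl hf
  have h1 := hF ⟨fun s => u (cl s), by fun_prop⟩ ⟨rfl, rfl⟩
  have h2 := hF ⟨fun s => v (cl s) + (u 0 - v 0), by fun_prop⟩ ⟨by
    simp [cl_eq mem0], by
    funext s
    simp only [Function.comp_apply, ContinuousMap.coe_mk, f]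
    rw [Complex.exp_add, h0, mul_one, h _ (cl_mem s)]⟩
  intro s hs
  have := DFunLike.congr_fun (h1.trans h2.symm) s
  simp only [ContinuousMap.coe_mk, cl_eq hs] at this
  rw [this]; ring

open Classical in
/-- variation of the logarithm -/
noncomputable def dl (g : ℝ → ℂ) : ℂ :=
  if h : ∃ u : ℝ → ℂ, Continuous u ∧ ∀ s ∈ Icc (0:ℝ) 1, Complex.exp (u s) = g s then
    h.choose 1 - h.choose 0 else 0

theorem dl_eq {g : ℝ → ℂ} {u : ℝ → ℂ} (hu : Continuous u)
    (h : ∀ s ∈ Icc (0:ℝ) 1, Complex.exp (u s) = g s) : dl g = u 1 - u 0 := by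
  have hex : ∃ u : ℝ → ℂ, Continuous u ∧ ∀ s ∈ Icc (0:ℝ) 1, Complex.exp (u s) = g s := ⟨u, hu, h⟩
  rw [dl, dif_pos hex]
  have := log_unique hu hex.choose_spec.1 (fun s hs => by rw [h s hs, hex.choose_spec.2 s hs]) 1 mem1
  linear_combination -this

/-- The logarithmic transport of a nonvanishing function. -/
noncomputable def dlogT {E : Type*} [TopologicalSpace E] (X : Set E) (g : E → ℂ) (hg : Continuous g)
    (hne : ∀ x ∈ X, g x ≠ 0) : Transport X (Multiplicative ℂ) where
  A γ := Multiplicative.ofAdd (dl fun t => g (γ t))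
  const x hx := by
    rw [dl_eq (u := fun _ => Complex.log (g x)) (by fun_prop) (fun _ _ => Complex.exp_log (hne x hx))]
    simp
  sq S hS hX := by
    obtain ⟨U, hU, h⟩ := log_lift2 (fun s t => g (S s t)) (hg.comp hS) (fun s hs t ht => hne _ (hX s hs t ht))
    rw [dl_eq (u := fun s => U s 0) (hU.comp (f := fun s : ℝ => (s, (0:ℝ))) (by fun_prop)) (fun s hs => h s hs 0 mem0),
      dl_eq (u := fun s => U s 1) (hU.comp (f := fun s : ℝ => (s, (1:ℝ))) (by fun_prop)) (fun s hs => h s hs 1 mem1),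
      dl_eq (u := fun s => U 0 s) (hU.comp (f := fun s : ℝ => ((0:ℝ), s)) (by fun_prop)) (fun s hs => h 0 mem0 s hs),
      dl_eq (u := fun s => U 1 s) (hU.comp (f := fun s : ℝ => ((1:ℝ), s)) (by fun_prop)) (fun s hs => h 1 mem1 s hs),
      ← ofAdd_add, ← ofAdd_add]
    congr 1
    ring

end logs
end Milnor

end

section
open Set Topology
set_option linter.unusedSectionVars false
namespace Milnor
section univ

variable {X : Type*} [TopologicalSpace X] (z : X)

open Classical in
/-- class of a path in the abelianized fundamental group -/
noncomputable def clq {x y : X} (p : Path.Homotopic.Quotient x y) :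
    Abelianization (FundamentalGroup X z) :=
  if h : Joined z x ∧ Joined z y then
    Abelianization.of (FundamentalGroup.fromPath
      (((Path.Homotopic.Quotient.mk h.1.somePath).trans p).trans (Path.Homotopic.Quotient.mk h.2.somePath).symm))
  else 1

theorem clq_trans {x y w : X} (p : Path.Homotopic.Quotient x y) (q : Path.Homotopic.Quotient y w) :
    clq z (p.trans q) = clq z p * clq z q := by
  induction p with | mk p =>
  induction q with | mk q =>
  by_cases hx : Joined z x
  · have hy : Joined z y := hx.trans ⟨p⟩
    have hw : Joined z w := hy.trans ⟨q⟩
    simp only [clq, hx, hy, hw, and_self, dite_true]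
    rw [mul_comm, ← map_mul]
    congr 1
    rw [FundamentalGroup.mul_def]
    simp only [Path.Homotopic.Quotient.trans_assoc]
    congr 2
    rw [← Path.Homotopic.Quotient.trans_assoc (Path.Homotopic.Quotient.symm _), Path.Homotopic.Quotient.symm_trans,
      Path.Homotopic.Quotient.refl_trans]
  · have hy : ¬ Joined z y := fun h => hx (h.trans ⟨p.symm⟩)
    simp [clq, hx, hy]

theorem clq_refl (x : X) : clq z (Path.Homotopic.Quotient.refl x) = 1 := by
  have := clq_trans z (Path.Homotopic.Quotient.refl x) (Path.Homotopic.Quotient.refl x)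
  rw [Path.Homotopic.Quotient.refl_trans] at this
  exact left_eq_mul.mp this

theorem clq_loop (p : Path.Homotopic.Quotient z z) :
    clq z p = Abelianization.of (FundamentalGroup.fromPath p) := by
  have h : Joined z z := Joined.refl z
  simp only [clq, h, and_self, dite_true]
  set c : Path.Homotopic.Quotient z z := Path.Homotopic.Quotient.mk h.somePath
  have : FundamentalGroup.fromPath ((c.trans p).trans c.symm) =
    (FundamentalGroup.fromPath c)⁻¹ * (FundamentalGroup.fromPath p * FundamentalGroup.fromPath c) := rfl
  rw [this, map_mul, map_mul, mul_comm (Abelianization.of (FundamentalGroup.fromPath p)), map_inv, inv_mul_cancel_left]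

end univ

section univ2
variable {E : Type*} [NormedAddCommGroup E] [NormedSpace ℝ E] {F : Set E} (z : F)

/-- curve to path -/
def toP {γ : ℝ → E} (h : Curve F γ) : Path (⟨γ 0, h.2 0 mem0⟩ : F) ⟨γ 1, h.2 1 mem1⟩ where
  toFun t := ⟨γ t, h.2 t t.2⟩
  continuous_toFun := by
    have := h.1
    exact Continuous.subtype_mk (by fun_prop) _
  source' := by simp
  target' := by simp

open Classical in
/-- The universal abelian transport -/
noncomputable def cls : Transport F (Abelianization (FundamentalGroup F z)) where
  A γ := if h : Curve F γ then clq z (Path.Homotopic.Quotient.mk (toP h)) else 1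
  const x hx := by
    have h : Curve F (fun _ => x) := ⟨continuous_const, fun _ _ => hx⟩
    rw [dif_pos h]
    have : toP h = Path.refl (⟨x, hx⟩ : F) := by ext; rfl
    rw [this]
    exact clq_refl z _
  sq S hS hX := by
    have h1 : Curve F (fun s => S s 0) := ⟨hS.comp (f := fun s : ℝ => (s, (0:ℝ))) (by fun_prop), fun s hs => hX s hs 0 mem0⟩
    have h2 : Curve F (fun t => S 1 t) := ⟨hS.comp (f := fun s : ℝ => ((1:ℝ), s)) (by fun_prop), fun s hs => hX 1 mem1 s hs⟩
    have h3 : Curve F (fun t => S 0 t) := ⟨hS.comp (f := fun s : ℝ => ((0:ℝ), s)) (by fun_prop), fun s hs => hX 0 mem0 s hs⟩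
    have h4 : Curve F (fun s => S s 1) := ⟨hS.comp (f := fun s : ℝ => (s, (1:ℝ))) (by fun_prop), fun s hs => hX s hs 1 mem1⟩
    rw [dif_pos h1, dif_pos h2, dif_pos h3, dif_pos h4]
    have e := clq_trans z (Path.Homotopic.Quotient.mk (toP h1)) (Path.Homotopic.Quotient.mk (toP h2))
    have e' := clq_trans z (Path.Homotopic.Quotient.mk (toP h3)) (Path.Homotopic.Quotient.mk (toP h4))
    refine e.symm.trans (Eq.trans ?_ e')
    congr 1
    rw [← Path.Homotopic.Quotient.mk_trans, ← Path.Homotopic.Quotient.mk_trans, Path.Homotopic.Quotient.eq]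
    let f : C(unitInterval × unitInterval, F) := ⟨fun p => ⟨S p.1 p.2, hX _ p.1.2 _ p.2.2⟩,
      Continuous.subtype_mk (hS.comp (f := fun p : unitInterval × unitInterval => ((p.1:ℝ), (p.2:ℝ))) (by fun_prop)) _⟩
    let q1 : Path ((0:unitInterval), (0:unitInterval)) (1, 0) := ⟨⟨fun s => (s, 0), by fun_prop⟩, rfl, rfl⟩
    let q2 : Path ((1:unitInterval), (0:unitInterval)) (1, 1) := ⟨⟨fun s => (1, s), by fun_prop⟩, rfl, rfl⟩
    let q3 : Path ((0:unitInterval), (0:unitInterval)) (0, 1) := ⟨⟨fun s => (0, s), by fun_prop⟩, rfl, rfl⟩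
    let q4 : Path ((0:unitInterval), (1:unitInterval)) (1, 1) := ⟨⟨fun s => (s, 1), by fun_prop⟩, rfl, rfl⟩
    have : ContractibleSpace unitInterval := (convex_Icc (0:ℝ) 1).contractibleSpace ⟨0, mem0⟩
    have hq : (q1.trans q2).Homotopic (q3.trans q4) := SimplyConnectedSpace.paths_homotopic _ _
    have := hq.map f
    rw [Path.map_trans, Path.map_trans] at this
    exact this

theorem cls_loop {γ : ℝ → E} (h : Curve F γ) (h0 : γ 0 = z) (h1 : γ 1 = z) :
    (cls z).A γ = Abelianization.of (FundamentalGroup.fromPath (Path.Homotopic.Quotient.mk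
      ((toP h).cast (Subtype.ext h0.symm) (Subtype.ext h1.symm)))) := by
  have hc : (cls z).A γ = clq z (Path.Homotopic.Quotient.mk (toP h)) := dif_pos h
  rw [hc, ← clq_loop]
  obtain ⟨z, hz⟩ := z
  simp only at h0 h1
  subst h0
  have : ∀ (w : F) (hw : w = ⟨γ 0, hz⟩) (p : Path ⟨γ 0, hz⟩ w), clq (⟨γ 0, hz⟩ : F) (Path.Homotopic.Quotient.mk p) =
    clq (⟨γ 0, hz⟩ : F) (Path.Homotopic.Quotient.mk (p.cast rfl hw.symm)) := by
    rintro w rfl p; rfl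
  exact this _ (Subtype.ext h1) _

theorem curve_extend {x y : F} (p : Path x y) : Curve F (fun t => (p.extend t : E)) :=
  ⟨continuous_subtype_val.comp p.continuous_extend, fun t _ => (p.extend t).2⟩

theorem cls_surj (g : Abelianization (FundamentalGroup F z)) :
    ∃ γ : ℝ → E, Continuous γ ∧ (∀ t, γ t ∈ F) ∧ γ 0 = z ∧ γ 1 = z ∧ (cls z).A γ = g := by
  induction g using QuotientGroup.induction_on with | _ g =>
  obtain ⟨p, rfl⟩ := Path.Homotopic.Quotient.mk_surjective g
  change ∃ γ : ℝ → E, Continuous γ ∧ (∀ t, γ t ∈ F) ∧ γ 0 = z ∧ γ 1 = z ∧ (cls z).A γ =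
    Abelianization.of (FundamentalGroup.fromPath (Path.Homotopic.Quotient.mk p))
  refine ⟨fun t => (p.extend t : E), (curve_extend p).1, fun t => (p.extend t).2, by simp, by simp, ?_⟩
  rw [cls_loop z (curve_extend p) (by simp) (by simp)]
  congr 3
  ext t
  simp [toP]

variable {G : Type*} [CommGroup G] (T : Transport F G)

/-- The homomorphism induced by a transport. -/
noncomputable def toHom : FundamentalGroup F z →* G where
  toFun := Quotient.lift (s := Path.Homotopic.setoid z z) (fun p : Path z z => T.A (fun t => (p.extend t : E))) (by
    rintro p q ⟨H⟩
    have := T.homotopy (fun s t => (H (projIcc 0 1 zero_le_one t, projIcc 0 1 zero_le_one s) : E))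
      (by fun_prop) (fun _ _ _ _ => Subtype.prop _) (a := z) (b := z) (by simp) (by simp)
    have e0 : projIcc (0:ℝ) 1 zero_le_one 0 = 0 := by simp
    have e1 : projIcc (0:ℝ) 1 zero_le_one 1 = 1 := by simp
    simp only [e0, e1, H.apply_zero, H.apply_one] at this
    exact this)
  map_one' := by
    change T.A (fun t => ((Path.refl z).extend t : E)) = 1
    simp only [Path.refl_extend]
    exact T.const _ z.2
  map_mul' := by
    rintro ⟨p⟩ ⟨q⟩
    change T.A (fun t => ((q.trans p).extend t : E)) = T.A (fun t => (p.extend t : E)) * T.A (fun t => (q.extend t : E))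
    rw [mul_comm, ← T.concat (curve_extend q) (curve_extend p) (by simp)]
    refine T.congr (curve_extend _) (curve_concat (curve_extend q) (curve_extend p) (by simp)).1 ?_
    intro t ht
    rw [Path.extend_apply _ ht, Path.trans_apply]
    unfold concat
    simp only
    split_ifs with h
    · rw [Path.extend_apply]
    · rw [Path.extend_apply]

theorem toHom_cls {γ : ℝ → E} (h : Curve F γ) (h0 : γ 0 = z) (h1 : γ 1 = z) :
    Abelianization.lift (toHom z T) ((cls z).A γ) = T.A γ := by
  rw [cls_loop z h h0 h1, Abelianization.lift_apply_of]
  change T.A _ = T.A _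
  symm
  refine T.congr h (curve_extend _).1 fun t ht => ?_
  rw [Path.extend_apply _ ht]
  rfl

end univ2
end Milnor

end

section
open Set Topology
set_option linter.unusedSectionVars false
namespace Milnor

/-- The ambient space. -/
abbrev E3 := Fin 3 → ℂ

section average
variable {L : Fin 12 → E3 →ₗ[ℂ] ℂ}

/-- Milnor fiber -/
def MF (L : Fin 12 → E3 →ₗ[ℂ] ℂ) : Set E3 := {z | ∏ i, L i z = 1}

/-- root of unity -/
noncomputable def eta : ℂ := Complex.exp (-(2 * Real.pi * Complex.I) / 12)

theorem eta_pow (n : ℕ) : eta ^ n = Complex.exp (-(2 * Real.pi * Complex.I) * n / 12) := by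
  rw [eta, ← Complex.exp_nat_mul]; congr 1; ring

theorem eta_twelve : eta ^ 12 = 1 := by
  rw [eta_pow, Complex.exp_eq_one_iff]
  exact ⟨-1, by push_cast; ring⟩

theorem eta_prim : IsPrimitiveRoot eta 12 := by
  have h := (Complex.isPrimitiveRoot_exp 12 (by norm_num)).inv
  rw [← Complex.exp_neg] at h
  have e : eta = Complex.exp (-(2 * Real.pi * Complex.I / (12:ℕ))) := by
    unfold eta; congr 1; push_cast; ring
  rw [e]; exact h

theorem smul_MF {c : ℂ} (hc : c ^ 12 = 1) {z : E3} (hz : z ∈ MF L) : c • z ∈ MF L := by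
  simp only [MF, mem_ofPred_eq, map_smul, smul_eq_mul, Finset.prod_mul_distrib] at hz ⊢
  simp [hz, hc]

theorem curve_smul {c : ℂ} (hc : c ^ 12 = 1) {γ : ℝ → E3} (h : Curve (MF L) γ) :
    Curve (MF L) (fun t => c • γ t) :=
  ⟨h.1.const_smul c, fun t ht => smul_MF hc (h.2 t ht)⟩

theorem eta_pow_pow (r : ℕ) : (eta ^ r) ^ 12 = 1 := by
  rw [← pow_mul, mul_comm, pow_mul, eta_twelve, one_pow]

/-- Eigencomponents of a transport. -/
noncomputable def wl (w : Transport (MF L) (Multiplicative ℂ)) (k : ℕ) :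
    Transport (MF L) (Multiplicative ℂ) where
  A γ := Multiplicative.ofAdd ((1 / 12) * ∑ r ∈ Finset.range 12,
    eta ^ (k * r) * Multiplicative.toAdd (w.A (fun t => eta ^ r • γ t)))
  const x hx := by
    have : ∀ r, w.A (fun _ => eta ^ r • x) = 1 := fun r => w.const _ (smul_MF (eta_pow_pow r) hx)
    simp [this]
  sq S hS hX := by
    rw [← ofAdd_add, ← ofAdd_add]
    congr 1
    rw [← mul_add, ← mul_add, ← Finset.sum_add_distrib, ← Finset.sum_add_distrib]
    congr 1
    refine Finset.sum_congr rfl fun r _ => ?_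
    rw [← mul_add, ← mul_add, ← toAdd_mul, ← toAdd_mul]
    have := w.sq (fun s t => eta ^ r • S s t) (by fun_prop)
      (fun s hs t ht => smul_MF (eta_pow_pow r) (hX s hs t ht))
    rw [this]

/-- additive form -/
noncomputable def Wl (w : Transport (MF L) (Multiplicative ℂ)) (k : ℕ) (γ : ℝ → E3) : ℂ :=
  Multiplicative.toAdd ((wl w k).A γ)

theorem Wl_eq (w : Transport (MF L) (Multiplicative ℂ)) (k : ℕ) (γ : ℝ → E3) :
    Wl w k γ = (1 / 12) * ∑ r ∈ Finset.range 12,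
      eta ^ (k * r) * Multiplicative.toAdd (w.A (fun t => eta ^ r • γ t)) := rfl

theorem Wl_sum (w : Transport (MF L) (Multiplicative ℂ)) (γ : ℝ → E3) :
    ∑ k ∈ Finset.range 12, Wl w k γ = Multiplicative.toAdd (w.A γ) := by
  simp only [Wl_eq]
  rw [← Finset.mul_sum, Finset.sum_comm]
  simp only [← Finset.sum_mul]
  rw [Finset.sum_eq_single 0]
  · simp
  · intro r hr hr0
    have : ∑ k ∈ Finset.range 12, eta ^ (k * r) = 0 := by
      have h1 : eta ^ r ≠ 1 := eta_prim.pow_ne_one_of_pos_of_lt hr0 (Finset.mem_range.mp hr)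
      have h2 := geom_sum_mul (eta ^ r) 12
      rw [eta_pow_pow, sub_self] at h2
      have := (mul_eq_zero.mp h2).resolve_right (sub_ne_zero.mpr h1)
      simpa [← pow_mul, mul_comm] using this
    rw [this, zero_mul]
  · simp

theorem Wl_eta (w : Transport (MF L) (Multiplicative ℂ)) (k : ℕ) (γ : ℝ → E3) :
    eta ^ k * Wl w k (fun t => eta • γ t) = Wl w k γ := by
  simp only [Wl_eq]
  set f : ℕ → ℂ := fun r => eta ^ (k * r) * Multiplicative.toAdd (w.A (fun t => eta ^ r • γ t)) with hf
  have h12 : f 12 = f 0 := by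
    simp only [hf]
    rw [mul_comm k, pow_mul, eta_twelve]
    simp
  have h := Finset.sum_range_succ f 12
  rw [Finset.sum_range_succ' f 12, h12] at h
  have h' := add_right_cancel h
  rw [← h', mul_left_comm, Finset.mul_sum]
  congr 1
  refine Finset.sum_congr rfl fun r _ => ?_
  simp only [hf, smul_smul, ← pow_succ]
  rw [← mul_assoc, ← pow_add]
  congr 2
  ring

theorem Wl_eta_pow (w : Transport (MF L) (Multiplicative ℂ)) (k n : ℕ) (γ : ℝ → E3) :
    eta ^ (k * n) * Wl w k (fun t => eta ^ n • γ t) = Wl w k γ := by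
  induction n with
  | zero => simp
  | succ n ih =>
    rw [← ih, ← Wl_eta w k (fun t => eta ^ n • γ t)]
    simp only [smul_smul, ← pow_succ']
    rw [← mul_assoc, ← pow_add]
    congr 2

theorem Wl_shift (w : Transport (MF L) (Multiplicative ℂ)) (k : ℕ) (m : ℤ) (γ : ℝ → E3) :
    Complex.exp (-(k / 12 * (m * (2 * Real.pi * Complex.I)))) *
      Wl w k (fun t => Complex.exp (-(m * (2 * Real.pi * Complex.I)) / 12) • γ t) = Wl w k γ := by
  obtain ⟨n, q, hm⟩ : ∃ n : ℕ, ∃ q : ℤ, m = n + 12 * q :=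
    ⟨(m % 12).toNat, m / 12, by omega⟩
  have h1 : Complex.exp (-(m * (2 * Real.pi * Complex.I)) / 12) = eta ^ n := by
    rw [eta_pow, Complex.exp_eq_exp_iff_exists_int]
    exact ⟨-q, by rw [hm]; push_cast; ring⟩
  have h2 : Complex.exp (-(k / 12 * (m * (2 * Real.pi * Complex.I)))) = eta ^ (k * n) := by
    rw [eta_pow, Complex.exp_eq_exp_iff_exists_int]
    exact ⟨-(k * q), by rw [hm]; push_cast; ring⟩
  rw [h1, h2, Wl_eta_pow]

end average
end Milnor

end

section
open Set Topology
set_option linter.unusedSectionVars false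
namespace Milnor

/-- Affine coordinates adapted to the line `j`. -/
structure Coord (L : Fin 12 → E3 →ₗ[ℂ] ℂ) (j : Fin 12) where
  e0 : E3
  e1 : E3
  e2 : E3
  π1 : E3 →ₗ[ℂ] ℂ
  π2 : E3 →ₗ[ℂ] ℂ
  h0 : L j e0 = 1
  h1 : L j e1 = 0
  h2 : L j e2 = 0
  hne : ∀ i, i ≠ j → L i e2 ≠ 0
  hπ : ∀ z, z = L j z • e0 + π1 z • e1 + π2 z • e2
  h11 : π1 e1 = 1
  h12 : π1 e2 = 0

/-- affine permutations -/
noncomputable def affP (b s : ℂ) : Equiv.Perm ℂ where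
  toFun c := b + Complex.exp s * c
  invFun c := Complex.exp (-s) * (c - b)
  left_inv c := by
    simp only [add_sub_cancel_left, ← mul_assoc, ← Complex.exp_add, neg_add_cancel, Complex.exp_zero, one_mul]
  right_inv c := by
    simp only [← mul_assoc, ← Complex.exp_add, add_neg_cancel, Complex.exp_zero, one_mul]; ring

theorem affP_apply (b s c : ℂ) : affP b s c = b + Complex.exp s * c := rfl

theorem affP_mul (b s b' s' : ℂ) : affP b s * affP b' s' = affP (b + Complex.exp s * b') (s + s') := by
  ext c
  simp only [Equiv.Perm.mul_apply, affP_apply, Complex.exp_add]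
  ring

section push
variable {L : Fin 12 → E3 →ₗ[ℂ] ℂ} {j : Fin 12} (c : Coord L j)

theorem contL (f : E3 →ₗ[ℂ] ℂ) : Continuous f := f.continuous_of_finiteDimensional

namespace Coord

/-- slopes -/
noncomputable def al (i : {i : Fin 12 // i ≠ j}) : ℂ := -(L i c.e1) / L i c.e2
/-- intercepts -/
noncomputable def be (i : {i : Fin 12 // i ≠ j}) : ℂ := -(L i c.e0) / L i c.e2
/-- affine chart -/
noncomputable def G (p : ℂ × ℂ) : E3 := c.e0 + p.1 • c.e1 + p.2 • c.e2
/-- polynomial in the chart -/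
noncomputable def Q (p : ℂ × ℂ) : ℂ := ∏ i, L i (c.G p)
/-- leading constant -/
noncomputable def C : ℂ := ∏ i : {i : Fin 12 // i ≠ j}, L i c.e2

theorem continuous_G : Continuous c.G := by unfold G; fun_prop
theorem continuous_Q : Continuous c.Q :=
  continuous_finsetProd _ fun _ _ => (contL _).comp c.continuous_G

theorem LG (i : {i : Fin 12 // i ≠ j}) (p : ℂ × ℂ) :
    L i (c.G p) = L i c.e2 * (p.2 - c.al i * p.1 - c.be i) := by
  have := c.hne i i.2
  simp only [G, map_add, map_smul, smul_eq_mul, al, be]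
  field_simp
  ring

theorem LjG (p : ℂ × ℂ) : L j (c.G p) = 1 := by
  simp [G, c.h0, c.h1, c.h2]

theorem C_ne : c.C ≠ 0 := Finset.prod_ne_zero_iff.mpr fun i _ => c.hne i i.2

theorem Q_eq (p : ℂ × ℂ) : c.Q p = c.C * ∏ i, (p.2 - c.al i * p.1 - c.be i) := by
  rw [Q, C, ← Finset.prod_mul_distrib]
  simp only [← c.LG]
  rw [← Finset.mul_prod_erase Finset.univ _ (Finset.mem_univ j), LjG, one_mul]
  exact Finset.prod_subtype _ (by simp) _

theorem Q_ne {p : ℂ × ℂ} (hp : p ∈ XSet c.al c.be) : c.Q p ≠ 0 := by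
  rw [Q_eq]
  refine mul_ne_zero c.C_ne (Finset.prod_ne_zero_iff.mpr fun i _ => ?_)
  have := hp i
  contrapose! this
  linear_combination this

/-- lift of a curve -/
noncomputable def lift (γ : ℝ → ℂ × ℂ) (u : ℝ → ℂ) (t : ℝ) : E3 := Complex.exp (-u t / 12) • c.G (γ t)

/-- admissible logarithms -/
def Lg (γ : ℝ → ℂ × ℂ) (u : ℝ → ℂ) : Prop := Continuous u ∧ ∀ t ∈ Icc (0:ℝ) 1, Complex.exp (u t) = c.Q (γ t)

theorem smul_mem {v : ℂ} {p : ℂ × ℂ} (h : Complex.exp v = c.Q p) :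
    Complex.exp (-v / 12) • c.G p ∈ MF L := by
  simp only [MF, mem_ofPred_eq, map_smul, smul_eq_mul, Finset.prod_mul_distrib]
  change _ * c.Q p = 1
  rw [← h]
  simp only [Finset.prod_const, Finset.card_univ, Fintype.card_fin, ← Complex.exp_nat_mul, ← Complex.exp_add]
  rw [← Complex.exp_zero]; congr 1; push_cast; ring

theorem curve_lift {γ : ℝ → ℂ × ℂ} {u : ℝ → ℂ} (hγ : Continuous γ) (hu : c.Lg γ u) :
    Curve (MF L) (c.lift γ u) := by
  refine ⟨?_, fun t ht => c.smul_mem (hu.2 t ht)⟩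
  have := c.continuous_G
  have := hu.1
  unfold lift
  fun_prop

theorem exists_Lg {γ : ℝ → ℂ × ℂ} (hγ : Curve (XSet c.al c.be) γ) : ∃ u, c.Lg γ u :=
  log_lift1 _ (c.continuous_Q.comp hγ.1) fun t ht => c.Q_ne (hγ.2 t ht)

variable (w : Transport (MF L) (Multiplicative ℂ)) (k : ℕ)

/-- translation part -/
noncomputable def bb (γ : ℝ → ℂ × ℂ) (u : ℝ → ℂ) : ℂ :=
  Complex.exp (-(k / 12 * u 0)) * Wl w k (c.lift γ u)

open Classical in
/-- transport function -/
noncomputable def TA (γ : ℝ → ℂ × ℂ) : Equiv.Perm ℂ :=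
  if h : ∃ u, c.Lg γ u then affP (c.bb w k γ h.choose) (k / 12 * (h.choose 1 - h.choose 0)) else 1

theorem TA_eq {γ : ℝ → ℂ × ℂ} (hγ : Continuous γ) {u : ℝ → ℂ} (hu : c.Lg γ u) :
    c.TA w k γ = affP (c.bb w k γ u) (k / 12 * (u 1 - u 0)) := by
  have hex : ∃ u, c.Lg γ u := ⟨u, hu⟩
  rw [TA, dif_pos hex]
  have hv := hex.choose_spec
  set v := hex.choose
  have key := log_unique hu.1 hv.1 (fun s hs => by rw [hu.2 s hs, hv.2 s hs])
  have h0 : Complex.exp (u 0) = Complex.exp (v 0) := by rw [hu.2 0 mem0, hv.2 0 mem0]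
  obtain ⟨m, hm⟩ := Complex.exp_eq_exp_iff_exists_int.mp h0
  have e1 : v 1 - v 0 = u 1 - u 0 := by linear_combination -(key 1 mem1)
  rw [e1]
  congr 1
  unfold bb
  rw [← Wl_shift w k m (c.lift γ v), ← mul_assoc, ← Complex.exp_add]
  have e2 : Wl w k (fun t => Complex.exp (-(m * (2 * Real.pi * Complex.I)) / 12) • c.lift γ v t) =
      Wl w k (c.lift γ u) := by
    unfold Wl
    congr 1
    symm
    refine (wl w k).congr (c.curve_lift hγ hu) ?_ fun t ht => ?_
    · have := (c.curve_lift hγ hv).1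
      fun_prop
    · simp only [lift, smul_smul, ← Complex.exp_add]
      congr 2
      linear_combination (-1/12) * key t ht - (1/12) * hm
  rw [e2]
  congr 2
  linear_combination (-(k:ℂ)/12) * -hm

/-- the pushed transport -/
noncomputable def T : Transport (XSet c.al c.be) (Equiv.Perm ℂ) where
  A := c.TA w k
  const x hx := by
    have hu : c.Lg (fun _ => x) (fun _ => Complex.log (c.Q x)) :=
      ⟨continuous_const, fun t _ => Complex.exp_log (c.Q_ne hx)⟩
    rw [c.TA_eq w k continuous_const hu]
    have : Wl w k (c.lift (fun _ => x) (fun _ => Complex.log (c.Q x))) = 0 := by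
      unfold Wl
      have := (wl w k).const _ (c.smul_mem (hu.2 0 mem0))
      exact congrArg Multiplicative.toAdd this
    ext y
    simp [bb, this, affP_apply]
  sq S hS hX := by
    obtain ⟨U, hU, h⟩ := log_lift2 (fun s t => c.Q (S s t)) (c.continuous_Q.comp hS)
      (fun s hs t ht => c.Q_ne (hX s hs t ht))
    have p1 : Continuous fun s : ℝ => (s, (0:ℝ)) := by fun_prop
    have p2 : Continuous fun s : ℝ => (s, (1:ℝ)) := by fun_prop
    have p3 : Continuous fun s : ℝ => ((0:ℝ), s) := by fun_prop
    have p4 : Continuous fun s : ℝ => ((1:ℝ), s) := by fun_prop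
    rw [c.TA_eq w k (γ := fun s => S s 0) (u := fun s => U s 0) (hS.comp p1) ⟨hU.comp p1, fun s hs => h s hs 0 mem0⟩,
      c.TA_eq w k (γ := fun s => S s 1) (u := fun s => U s 1) (hS.comp p2) ⟨hU.comp p2, fun s hs => h s hs 1 mem1⟩,
      c.TA_eq w k (γ := fun s => S 0 s) (u := fun s => U 0 s) (hS.comp p3) ⟨hU.comp p3, fun s hs => h 0 mem0 s hs⟩,
      c.TA_eq w k (γ := fun s => S 1 s) (u := fun s => U 1 s) (hS.comp p4) ⟨hU.comp p4, fun s hs => h 1 mem1 s hs⟩,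
      affP_mul, affP_mul]
    have key := (wl w k).sq (fun s t => Complex.exp (-U s t / 12) • c.G (S s t)) (by
      have := c.continuous_G
      fun_prop) (fun s hs t ht => c.smul_mem (h s hs t ht))
    have key2 := congrArg Multiplicative.toAdd key
    rw [toAdd_mul, toAdd_mul] at key2
    congr 1
    · simp only [bb, ← mul_assoc, ← Complex.exp_add]
      change Wl w k (c.lift (fun s => S s 0) (fun s => U s 0)) + Wl w k (c.lift (fun s => S 1 s) (fun s => U 1 s)) =
        Wl w k (c.lift (fun s => S 0 s) (fun s => U 0 s)) + Wl w k (c.lift (fun s => S s 1) (fun s => U s 1)) at key2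
      have e1 : (k / 12 * (U 1 0 - U 0 0) + -(k / 12 * U 1 0) : ℂ) = -(k / 12 * U 0 0) := by ring
      have e2 : (k / 12 * (U 0 1 - U 0 0) + -(k / 12 * U 0 1) : ℂ) = -(k / 12 * U 0 0) := by ring
      rw [e1, e2, ← mul_add, ← mul_add, key2]
    · ring

theorem affT : AffT (c.T w k) (k / 12) := by
  intro γ hγ u hu hexp x
  have hl : c.Lg γ (fun t => u t + Complex.log c.C) := ⟨by fun_prop, fun t ht => by
    rw [Complex.exp_add, hexp t ht, Complex.exp_log c.C_ne, c.Q_eq, mul_comm]⟩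
  change c.TA w k γ x = c.TA w k γ 0 + _
  rw [c.TA_eq w k hγ.1 hl]
  simp [affP_apply]

theorem trT : TrT (c.T w 0) := by
  intro γ hγ x
  obtain ⟨u, hu⟩ := c.exists_Lg hγ
  change c.TA w 0 γ x = c.TA w 0 γ 0 + _
  rw [c.TA_eq w 0 hγ.1 hu]
  simp [affP_apply]

theorem loop_zero {f : ℂ × ℂ → ℂ} (hf : (c.T w k).Flat (XSet c.al c.be) f) {γ : ℝ → E3}
    (hγ : Continuous γ) (hm : ∀ t, γ t ∈ MF L) (h01 : γ 0 = γ 1) : Wl w k γ = 0 := by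
  have hLne : ∀ i t, L i (γ t) ≠ 0 := by
    intro i t h
    have := hm t
    simp only [MF, mem_ofPred_eq] at this
    rw [Finset.prod_eq_zero (Finset.mem_univ i) h] at this
    exact zero_ne_one this
  have hcj := (contL (L j)).comp hγ
  obtain ⟨v, hv, hev⟩ := log_lift1 (fun t => L j (γ t)) hcj (fun t _ => hLne j t)
  let p : ℝ → ℂ × ℂ := fun t => (c.π1 (γ t) / L j (γ t), c.π2 (γ t) / L j (γ t))
  have hp : Continuous p := by
    refine Continuous.prodMk ?_ ?_
    · exact ((contL _).comp hγ).div hcj (hLne j)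
    · exact ((contL _).comp hγ).div hcj (hLne j)
  have hG : ∀ t, L j (γ t) • c.G (p t) = γ t := by
    intro t
    conv_rhs => rw [c.hπ (γ t)]
    simp only [G, p, smul_add, smul_smul, mul_div_cancel₀ _ (hLne j t)]
  have hpX : Curve (XSet c.al c.be) p := by
    refine ⟨hp, fun t _ i hi => hLne i t ?_⟩
    rw [← hG t, map_smul, c.LG, hi]
    simp
  have hLg : c.Lg p (fun t => -12 * v t) := by
    refine ⟨by fun_prop, fun t ht => ?_⟩
    have h1 := hm t
    rw [← hG t] at h1
    simp only [MF, mem_ofPred_eq, map_smul, smul_eq_mul, Finset.prod_mul_distrib, Finset.prod_const,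
      Finset.card_univ, Fintype.card_fin] at h1
    change _ * c.Q (p t) = 1 at h1
    have h2 : Complex.exp (-12 * v t) * (L j (γ t)) ^ 12 = 1 := by
      rw [← hev t ht, ← Complex.exp_nat_mul, ← Complex.exp_add, ← Complex.exp_zero]
      congr 1; push_cast; ring
    have h3 : L j (γ t) ^ 12 ≠ 0 := pow_ne_zero _ (hLne j t)
    apply mul_right_cancel₀ h3
    rw [h2, mul_comm, h1]
  have hflat := hf p hpX
  have hp01 : p 1 = p 0 := by simp only [p, h01]
  change c.TA w k p (f (p 1)) = f (p 0) at hflat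
  rw [c.TA_eq w k hp hLg, hp01, affP_apply] at hflat
  have hχ : Complex.exp (k / 12 * (-12 * v 1 - -12 * v 0)) = 1 := by
    have : Complex.exp (v 1 - v 0) = 1 := by
      rw [Complex.exp_sub, hev 1 mem1, hev 0 mem0, h01, div_self (hLne j 1)]
    have e : (k / 12 * (-12 * v 1 - -12 * v 0) : ℂ) = -((k:ℕ) * (v 1 - v 0)) := by ring
    rw [e, Complex.exp_neg, Complex.exp_nat_mul, this]; simp
  rw [hχ, one_mul] at hflat
  have hb : c.bb w k p (fun t => -12 * v t) = 0 := by linear_combination hflat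
  have hw := (mul_eq_zero.mp hb).resolve_left (Complex.exp_ne_zero _)
  rw [← hw]
  unfold Wl
  congr 1
  refine (wl w k).congr ⟨hγ, fun t _ => hm t⟩ (c.curve_lift hp hLg).1 fun t ht => ?_
  simp only [lift]
  have : -(-12 * v t) / 12 = v t := by ring
  rw [this, hev t ht, hG]

end Coord
end push
end Milnor

end

section
open Set Topology
set_option linter.unusedSectionVars false
namespace Milnor

/-- pairwise non-proportionality, in terms of kernels -/
def Pw (L : Fin 12 → E3 →ₗ[ℂ] ℂ) : Prop := ∀ i j, i ≠ j → ∃ v, L j v = 0 ∧ L i v ≠ 0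

section coord
variable {L : Fin 12 → E3 →ₗ[ℂ] ℂ}

theorem exists_coord (hL : Pw L) (j : Fin 12) : Nonempty (Coord L j) := by
  obtain ⟨i, hij⟩ := exists_ne j
  obtain ⟨e2, he2, hne⟩ := Module.Dual.exists_forall_mem_ne_zero_of_forall_exists (K := ℂ)
    (LinearMap.ker (L j)) (fun k : {k : Fin 12 // k ≠ j} => L k)
    (fun k => (hL k j k.2).imp fun v hv => ⟨hv.1, hv.2⟩)
  obtain ⟨v, -, hv⟩ := hL j i hij.symm
  have hker : LinearMap.ker ((L j).prod (L i)) ≠ ⊥ :=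
    LinearMap.ker_ne_bot_of_finrank_lt (by simp)
  obtain ⟨e1, he1, he1n⟩ := Submodule.exists_mem_ne_zero_of_ne_bot hker
  replace he1 : L j e1 = 0 ∧ L i e1 = 0 := Prod.mk_eq_zero.mp (LinearMap.mem_ker.mp he1)
  have h2 : L j e2 = 0 := he2
  have hi2 : L i e2 ≠ 0 := hne ⟨i, hij⟩
  let e0 : E3 := (L j v)⁻¹ • v
  have h0 : L j e0 = 1 := by simp [e0, hv]
  have hli : LinearIndependent ℂ ![e0, e1, e2] := by
    rw [Fintype.linearIndependent_iff]
    intro g hg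
    simp only [Fin.sum_univ_three, Matrix.cons_val_zero, Matrix.cons_val_one, Matrix.cons_val] at hg
    have a0 : g 0 = 0 := by
      have := congrArg (L j) hg
      simpa [h0, he1.1, h2] using this
    have a2 : g 2 = 0 := by
      have := congrArg (L i) hg
      simpa [a0, he1.2, hi2] using this
    have a1 : g 1 = 0 := by
      simpa [a0, a2, he1n] using hg
    intro k
    fin_cases k <;> assumption
  let b := basisOfLinearIndependentOfCardEqFinrank hli (by simp)
  have hb : ⇑b = ![e0, e1, e2] := coe_basisOfLinearIndependentOfCardEqFinrank hli _
  have hb1 : b 1 = e1 := by rw [hb]; rfl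
  have hb2 : b 2 = e2 := by rw [hb]; rfl
  have hb0 : b 0 = e0 := by rw [hb]; rfl
  have hsum : ∀ z, z = b.coord 0 z • e0 + b.coord 1 z • e1 + b.coord 2 z • e2 := by
    intro z
    have := b.sum_repr z
    rw [Fin.sum_univ_three, hb0, hb1, hb2] at this
    exact this.symm
  refine ⟨⟨e0, e1, e2, b.coord 1, b.coord 2, h0, he1.1, h2, fun k hk => hne ⟨k, hk⟩, ?_, ?_, ?_⟩⟩
  · intro z
    have h := hsum z
    have : L j z = b.coord 0 z := by
      conv_lhs => rw [h]
      simp [h0, he1.1, h2]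
    rw [this]
    exact h
  · rw [← hb1]; simp
  · rw [← hb2]; simp

variable {j : Fin 12} (c : Coord L j)

theorem Coord.distinct (hL : Pw L) (i k : {i : Fin 12 // i ≠ j}) (hik : i ≠ k) (h : c.al i = c.al k) :
    c.be i ≠ c.be k := by
  intro h'
  have hik' : (i : Fin 12) ≠ k := fun h => hik (Subtype.ext h)
  obtain ⟨v, hv, hv'⟩ := hL i k hik'
  apply hv'
  have hi := c.hne i i.2
  have hk := c.hne k k.2
  unfold Coord.al at h
  unfold Coord.be at h'
  rw [div_eq_div_iff hi hk] at h h'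
  have key : L i v * L k c.e2 = L k v * L i c.e2 := by
    rw [c.hπ v]
    simp only [map_add, map_smul, smul_eq_mul]
    linear_combination -(L j v) * h' - (c.π1 v) * h
  rw [hv, zero_mul] at key
  exact (mul_eq_zero.mp key).resolve_right hk

/-- the point at infinity in the direction `i` -/
noncomputable def Coord.vv (i : {i : Fin 12 // i ≠ j}) : E3 := c.e1 + c.al i • c.e2

theorem Coord.vv_ne (i : {i : Fin 12 // i ≠ j}) : c.vv i ≠ 0 := by
  intro h
  have := congrArg c.π1 h
  simp [Coord.vv, c.h11, c.h12] at this

theorem Coord.Lj_vv (i : {i : Fin 12 // i ≠ j}) : L j (c.vv i) = 0 := by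
  simp [Coord.vv, c.h1, c.h2]

theorem Coord.L_vv (i k : {i : Fin 12 // i ≠ j}) : L k (c.vv i) = 0 ↔ c.al k = c.al i := by
  have hk := c.hne k k.2
  have e : L k (c.vv i) = L k c.e2 * (c.al i - c.al k) := by
    simp only [Coord.vv, map_add, map_smul, smul_eq_mul, Coord.al]
    field_simp
    ring
  rw [e, mul_eq_zero, or_iff_right hk, sub_eq_zero, eq_comm]

theorem Coord.card (i : {i : Fin 12 // i ≠ j}) :
    Nat.card {k // c.al k ≠ c.al i} + Nat.card {k : Fin 12 // L k (c.vv i) = 0} = 12 := by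
  classical
  have e : {k // c.al k ≠ c.al i} ≃ {k : Fin 12 // ¬ L k (c.vv i) = 0} :=
    { toFun := fun k => ⟨k.1.1, fun h => k.2 ((c.L_vv i k.1).mp h)⟩
      invFun := fun k => ⟨⟨k.1, fun h => k.2 (by rw [h]; exact c.Lj_vv i)⟩, fun h => k.2 ((c.L_vv i ⟨k.1, _⟩).mpr h)⟩
      left_inv := fun _ => rfl
      right_inv := fun _ => rfl }
  rw [Nat.card_congr e, Nat.card_eq_fintype_card, Nat.card_eq_fintype_card, Fintype.card_subtype_compl]
  have := Fintype.card_subtype_le (fun k : Fin 12 => L k (c.vv i) = 0)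
  simp only [Fintype.card_fin] at this ⊢
  omega

theorem Coord.card_ge (i k : {i : Fin 12 // i ≠ j}) (hik : k ≠ i) (h : c.al k = c.al i) :
    3 ≤ Nat.card {k : Fin 12 // L k (c.vv i) = 0} := by
  classical
  rw [Nat.card_eq_fintype_card, Fintype.card_subtype]
  have : ({j, k.1, i.1} : Finset (Fin 12)) ⊆ Finset.univ.filter (fun k => L k (c.vv i) = 0) := by
    intro x hx
    simp only [Finset.mem_insert, Finset.mem_singleton] at hx
    simp only [Finset.mem_filter, Finset.mem_univ, true_and]
    rcases hx with rfl | rfl | rfl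
    · exact c.Lj_vv i
    · exact (c.L_vv i k).mpr h
    · exact (c.L_vv i i).mpr rfl
  refine le_trans (le_of_eq ?_) (Finset.card_le_card this)
  rw [Finset.card_eq_three.mpr ⟨j, k.1, i.1, k.2.symm, i.2.symm, fun h => hik (Subtype.ext h), rfl⟩]

theorem exp_ne {k n : ℕ} (h : ¬ 12 ∣ k * n) :
    Complex.exp ((k : ℂ) / 12 * (2 * Real.pi * Complex.I * (n : ℕ))) ≠ 1 := by
  intro he
  obtain ⟨m, hm⟩ := Complex.exp_eq_one_iff.mp he
  have h2 : (2 * Real.pi * Complex.I : ℂ) ≠ 0 := Complex.two_pi_I_ne_zero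
  have h3 : ((k * n : ℕ) : ℂ) = 12 * m := by
    push_cast
    apply mul_left_cancel₀ h2
    linear_combination 12 * hm
  have h4 : ((k * n : ℕ) : ℤ) = 12 * m := by exact_mod_cast h3
  apply h
  exact_mod_cast Dvd.intro m h4.symm

theorem Coord.vanish (c : Coord L j) (hL : Pw L) (w : Transport (MF L) (Multiplicative ℂ)) {k : ℕ} (hk : ¬ 12 ∣ k * 11)
    (hm : ∀ v : E3, v ≠ 0 → L j v = 0 → 3 ≤ Nat.card {i : Fin 12 // L i v = 0} →
      ¬ 12 ∣ k * (12 - Nat.card {i : Fin 12 // L i v = 0})) {γ : ℝ → E3}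
    (hγ : Continuous γ) (hF : ∀ t, γ t ∈ MF L) (h01 : γ 0 = γ 1) : Wl w k γ = 0 := by
  obtain ⟨f, hf⟩ := nontriv_ext (c.affT w k) (c.distinct hL) (by
    have : Fintype.card {i : Fin 12 // i ≠ j} = 11 := by simp
    rw [this]
    exact exp_ne hk) (by
    intro i
    by_cases h : ∀ k, c.al k = c.al i → k = i
    · exact Or.inl h
    · right
      push Not at h
      obtain ⟨l, hl, hli⟩ := h
      have h3 := c.card_ge i l hli hl
      have h4 := c.card i
      have h5 : Nat.card {k // c.al k ≠ c.al i} = 12 - Nat.card {k : Fin 12 // L k (c.vv i) = 0} := by omega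
      rw [h5]
      exact exp_ne (hm _ (c.vv_ne i) (c.Lj_vv i) h3))
  exact c.loop_zero w k hf hγ hF h01

theorem Coord.triv (c : Coord L j) (hL : Pw L) : ∃ z : {i : Fin 12 // i ≠ j} → ℝ → E3, ∀ w : Transport (MF L) (Multiplicative ℂ),
    (∀ i, Wl w 0 (z i) = 0) → ∀ γ : ℝ → E3, Continuous γ → (∀ t, γ t ∈ MF L) → γ 0 = γ 1 →
      Wl w 0 γ = 0 := by
  obtain ⟨-, -, -, x₀, hx₀, -⟩ := exists_generic (c.distinct hL)
  obtain ⟨ε, hε⟩ := exists_sep hx₀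
  let μ : {i : Fin 12 // i ≠ j} → ℝ → ℂ × ℂ := fun i t => (x₀, circ (c.al i * x₀ + c.be i) ε t)
  have hμ : ∀ i, Curve (XSet c.al c.be) (μ i) := by
    intro i
    refine ⟨by have := continuous_circ (c.al i * x₀ + c.be i) ε; fun_prop, fun t _ k hk => ?_⟩
    have hn := circ_norm (c.al i * x₀ + c.be i) ε t
    simp only [μ] at hk
    rw [hk, abs_of_pos hε.1] at hn
    have := hε.2 i k hn.le
    subst this
    simp only [sub_self, norm_zero] at hn
    exact hε.1.ne hn
  choose u hu using fun i => c.exists_Lg (hμ i)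
  refine ⟨fun i => c.lift (μ i) (u i), fun w hw γ hγ hF h01 => ?_⟩
  obtain ⟨f, hf⟩ := triv_ext (c.trT w) hx₀ hε (by
    intro i
    change c.TA w 0 (μ i) 0 = 0
    rw [c.TA_eq w 0 (hμ i).1 (hu i), affP_apply, mul_zero, add_zero, Coord.bb, hw i, mul_zero])
  exact c.loop_zero w 0 hf hγ hF h01

end coord
end Milnor

end

section
open Set Topology
open scoped TensorProduct
set_option linter.unusedSectionVars false
namespace Milnor

section upper
variable {L : Fin 12 → E3 →ₗ[ℂ] ℂ} (z : MF L)

/-- complexified abelianized fundamental group -/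
abbrev VV := ℂ ⊗[ℤ] Additive (Abelianization (FundamentalGroup (MF L) z))

/-- transport of a functional -/
noncomputable def trf (φ : VV z →ₗ[ℂ] ℂ) : Transport (MF L) (Multiplicative ℂ) where
  A γ := Multiplicative.ofAdd (φ (1 ⊗ₜ Additive.ofMul ((cls z).A γ)))
  const x hx := by rw [(cls z).const x hx]; simp
  sq S hS hX := by
    rw [← ofAdd_add, ← ofAdd_add, ← map_add, ← map_add, ← TensorProduct.tmul_add, ← TensorProduct.tmul_add,
      ← ofMul_mul, ← ofMul_mul, (cls z).sq S hS hX]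

theorem upper (hL : Pw L) (hv : ∀ (w : Transport (MF L) (Multiplicative ℂ)) (k : ℕ), 0 < k → k < 12 →
    ∀ γ : ℝ → E3, Continuous γ → (∀ t, γ t ∈ MF L) → γ 0 = γ 1 → Wl w k γ = 0) :
    Module.rank ℂ (VV z) ≤ 11 := by
  obtain ⟨c⟩ := exists_coord hL 0
  obtain ⟨y, hy⟩ := c.triv hL
  let Φ : Module.Dual ℂ (VV z) →ₗ[ℂ] ({i : Fin 12 // i ≠ 0} → ℂ) :=
    { toFun := fun φ i => Wl (trf z φ) 0 (y i)
      map_add' := fun φ ψ => by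
        funext i
        simp only [Wl_eq, trf, toAdd_ofAdd, LinearMap.add_apply, mul_add, Finset.sum_add_distrib, Pi.add_apply]
      map_smul' := fun a φ => by
        funext i
        simp only [Wl_eq, trf, toAdd_ofAdd, LinearMap.smul_apply, smul_eq_mul, Pi.smul_apply, RingHom.id_apply,
          Finset.mul_sum]
        refine Finset.sum_congr rfl fun r _ => ?_
        ring }
  have hΦ : Function.Injective Φ := by
    rw [injective_iff_map_eq_zero]
    intro φ hφ
    have h0 : ∀ g, φ (1 ⊗ₜ g) = 0 := by
      intro g
      obtain ⟨γ, hγ, hF, hγ0, hγ1, hg⟩ := cls_surj z g.toMul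
      have h01 : γ 0 = γ 1 := by rw [hγ0, hγ1]
      have e : Multiplicative.toAdd ((trf z φ).A γ) = φ (1 ⊗ₜ g) := by
        simp only [trf, toAdd_ofAdd, hg, ofMul_toMul]
      rw [← e, ← Wl_sum]
      refine Finset.sum_eq_zero fun k hk => ?_
      rcases Nat.eq_zero_or_pos k with rfl | hk0
      · exact hy _ (fun i => congrFun hφ i) γ hγ hF h01
      · exact hv _ k hk0 (Finset.mem_range.mp hk) γ hγ hF h01
    ext x
    exact h0 x
  have hfin : Module.Finite ℂ (Module.Dual ℂ (VV z)) := FiniteDimensional.of_injective Φ hΦ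
  have hfin2 : Module.Finite ℂ (VV z) := Module.finite_dual_iff ℂ |>.mp hfin
  have h1 := LinearMap.finrank_le_finrank_of_injective hΦ
  rw [Subspace.dual_finrank_eq] at h1
  have h2 : Module.finrank ℂ ({i : Fin 12 // i ≠ 0} → ℂ) = 11 := by simp
  rw [h2] at h1
  rw [← Module.finrank_eq_rank]
  exact_mod_cast h1

theorem lower (γ : Fin 11 → ℝ → E3) (hγ : ∀ i, Curve (MF L) (γ i)) (h0 : ∀ i, γ i 0 = z) (h1 : ∀ i, γ i 1 = z)
    (hd : ∀ i k : Fin 11, dl (fun t => L k.castSucc (γ i t)) = 2 * Real.pi * Complex.I * (if i = k then 11 else -1)) :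
    11 ≤ Module.rank ℂ (VV z) := by
  have hne : ∀ k, ∀ x ∈ MF L, L k x ≠ 0 := by
    intro i x hx h
    simp only [MF, mem_ofPred_eq] at hx
    rw [Finset.prod_eq_zero (Finset.mem_univ i) h] at hx
    exact zero_ne_one hx
  let D : Fin 12 → Transport (MF L) (Multiplicative ℂ) := fun k => dlogT (MF L) (L k) (contL _) (hne k)
  let ψ : Fin 12 → VV z →ₗ[ℂ] ℂ := fun k => LinearMap.liftBaseChange ℂ
    (AddMonoidHom.toIntLinearMap (MonoidHom.toAdditiveLeft (Abelianization.lift (toHom z (D k)))))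
  let x : Fin 11 → VV z := fun i => 1 ⊗ₜ Additive.ofMul ((cls z).A (γ i))
  have hψ : ∀ i k : Fin 11, ψ k.castSucc (x i) = 2 * Real.pi * Complex.I * (if i = k then 11 else -1) := by
    intro i k
    rw [← hd i k]
    have := toHom_cls z (D k.castSucc) (hγ i) (h0 i) (h1 i)
    have h3 := congrArg Multiplicative.toAdd this
    simp only [ψ, x, LinearMap.liftBaseChange_tmul, one_smul]
    exact h3
  have hli : LinearIndependent ℂ x := by
    rw [Fintype.linearIndependent_iff]
    intro g hg
    have h2 : (2 * Real.pi * Complex.I : ℂ) ≠ 0 := Complex.two_pi_I_ne_zero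
    have key : ∀ k, 12 * g k = ∑ i, g i := by
      intro k
      have := congrArg (ψ k.castSucc) hg
      simp only [map_sum, map_smul, hψ, map_zero, smul_eq_mul] at this
      have e : ∀ i, g i * (2 * Real.pi * Complex.I * (if i = k then 11 else -1)) =
        2 * Real.pi * Complex.I * ((if i = k then 12 * g i else 0) - g i) := by
        intro i; split_ifs <;> ring
      simp only [e] at this
      rw [← Finset.mul_sum] at this
      have := (mul_eq_zero.mp this).resolve_left h2
      rw [Finset.sum_sub_distrib, Finset.sum_ite_eq' Finset.univ k] at this
      simp only [Finset.mem_univ, if_true] at this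
      exact sub_eq_zero.mp this
    have hs : ∑ i, g i = 0 := by
      have : ∑ k : Fin 11, 12 * g k = ∑ k : Fin 11, ∑ i, g i := Finset.sum_congr rfl fun k _ => key k
      rw [← Finset.mul_sum, Finset.sum_const, Finset.card_univ, Fintype.card_fin, nsmul_eq_mul] at this
      push_cast at this
      linear_combination this
    intro i
    have := key i
    rw [hs] at this
    simpa using this
  have := hli.cardinal_lift_le_rank
  simpa using this

end upper
end Milnor

end

section
open Set Topology
set_option linter.unusedSectionVars false
namespace Milnor

theorem dl_circle {s : ℂ} {ε : ℝ} (hε : 0 < ε) :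
    dl (fun t => circ s ε (12 * t) - s) = 24 * Real.pi * Complex.I := by
  have hne : -(Complex.I * ε) ≠ 0 := by simp [hε.ne']
  rw [dl_eq (u := fun t : ℝ => Complex.log (-(Complex.I * ε)) + 2 * Real.pi * Complex.I * (12 * t : ℝ)) (by fun_prop)]
  · push_cast; ring
  · intro t _
    rw [Complex.exp_add, Complex.exp_log hne]
    simp only [circ, ee]
    ring

theorem dl_far {s s' : ℂ} {ε : ℝ} (hε : 0 < ε) (h : ε < ‖s' - s‖) :
    dl (fun t => circ s ε (12 * t) - s') = 0 := by
  have hne : s - s' ≠ 0 := by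
    intro h0
    have h1 : s' - s = 0 := by linear_combination -h0
    rw [h1, norm_zero] at h
    linarith
  have hn : ∀ t : ℝ, (circ s ε (12 * t) - s') / (s - s') ∈ Complex.slitPlane := by
    intro t
    have hh := Complex.mem_slitPlane_of_norm_lt_one (z := (circ s ε (12 * t) - s) / (s - s')) (by
      rw [norm_div, circ_norm, abs_of_pos hε, div_lt_one (norm_pos_iff.mpr hne), norm_sub_rev]
      exact h)
    have e : (circ s ε (12 * t) - s') / (s - s') = 1 + (circ s ε (12 * t) - s) / (s - s') := by
      rw [div_eq_iff hne, add_mul, div_mul_cancel₀ _ hne]; ring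
    rw [e]; exact hh
  have hc := continuous_circ s ε
  rw [dl_eq (u := fun t : ℝ => Complex.log ((circ s ε (12 * t) - s') / (s - s')) + Complex.log (s - s'))]
  · have : circ s ε (12 * 1) = circ s ε (12 * 0) := by
      have h12 : ee 12 = 1 := by
        rw [ee, Complex.exp_eq_one_iff]; exact ⟨12, by push_cast; ring⟩
      simp [circ, h12, ee_zero]
    rw [this]; simp
  · refine Continuous.add ?_ continuous_const
    exact Continuous.clog (by fun_prop) hn
  · intro t _
    rw [Complex.exp_add, Complex.exp_log hne, Complex.exp_log (Complex.slitPlane_ne_zero (hn t))]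
    field_simp

theorem exists_r (s : Fin 12 → ℂ) (hs : Function.Injective s) (h0 : ∀ k, s k ≠ 0) (i : Fin 12) :
    ∃ (r : ℝ → ℂ) (U : Fin 12 → ℝ → ℂ), Continuous r ∧ r 0 = 0 ∧ r 1 = 0 ∧ (∀ k, Continuous (U k)) ∧
      (∀ k, ∀ t ∈ Icc (0:ℝ) 1, Complex.exp (U k t) = r t - s k) ∧
      ∀ k, U k 1 - U k 0 = if i = k then 24 * Real.pi * Complex.I else 0 := by
  have hB : (0:ℂ) ∉ BSet (fun _ : Fin 12 => (0:ℂ)) s := by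
    rintro ⟨a, b, hab, h⟩
    simp only [zero_mul, zero_add] at h
    exact hab (hs h)
  obtain ⟨ε, hε, hsep⟩ := exists_sep hB
  simp only [zero_mul, zero_add] at hsep
  have hfin : (range s).Countable := (Set.finite_range s).countable
  have hcirc : ∀ t, circ (s i) ε t ∉ range s := by
    rintro t ⟨k, hk⟩
    have hn := circ_norm (s i) ε t
    rw [← hk, abs_of_pos hε] at hn
    have := hsep i k hn.le
    rw [this, sub_self, norm_zero] at hn
    exact hε.ne hn
  obtain ⟨ρ, hρ, hρ0, hρ1⟩ := path_compl hfin (y := 0) (y' := circ (s i) ε 0)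
    (by rintro ⟨k, hk⟩; exact h0 k hk) (hcirc 0)
  have hcc := continuous_circ (s i) ε
  have hδ : Curve (range s)ᶜ (fun t => circ (s i) ε (12 * t)) := ⟨by fun_prop, fun t _ => hcirc _⟩
  have hρr : Curve (range s)ᶜ (fun t => ρ (1 - t)) :=
    ⟨by have := hρ.1; fun_prop, fun t ht => hρ.2 _ ⟨by linarith [ht.2], by linarith [ht.1]⟩⟩
  have j1 : ρ 1 = circ (s i) ε (12 * 0) := by rw [hρ1, mul_zero]
  have hc1 := curve_concat hρ hδ j1
  have h12 : ee 12 = 1 := by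
    rw [ee, Complex.exp_eq_one_iff]; exact ⟨12, by push_cast; ring⟩
  have j2 : concat ρ (fun t => circ (s i) ε (12 * t)) 1 = (fun t => ρ (1 - t)) 0 := by
    simp [hρ1, circ, h12, ee_zero]
  have hc2 := curve_concat hc1 hρr j2
  set r := concat (concat ρ (fun t => circ (s i) ε (12 * t))) (fun t => ρ (1 - t)) with hr
  have hne : ∀ k, ∀ x ∈ (range s)ᶜ, x - s k ≠ 0 := by
    intro k x hx h
    exact hx ⟨k, (sub_eq_zero.mp h).symm⟩
  choose U hU hUe using fun k => log_lift1 (fun t => r t - s k) (by have := hc2.1; fun_prop)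
    (fun t ht => hne k _ (hc2.2 t ht))
  refine ⟨r, U, hc2.1, by simp [hr, hρ0], by simp [hr, hρ0], hU, hUe, fun k => ?_⟩
  rw [← dl_eq (hU k) (hUe k)]
  let D := dlogT (range s)ᶜ (fun x => x - s k) (by fun_prop) (hne k)
  have e1 : D.A r = D.A (fun t => circ (s i) ε (12 * t)) := by
    rw [hr, D.concat hc1 hρr j2, D.concat hρ hδ j1, D.reverse hρ, mul_comm (D.A ρ), mul_inv_cancel_right]
  have e2 : dl (fun t => r t - s k) = dl (fun t => circ (s i) ε (12 * t) - s k) :=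
    congrArg Multiplicative.toAdd e1
  rw [e2]
  split_ifs with hik
  · subst hik; exact dl_circle hε
  · apply dl_far hε
    by_contra hcon
    exact hik (hsep i k (not_lt.mp hcon)).symm

theorem exists_dir {L : Fin 12 → E3 →ₗ[ℂ] ℂ} (hL : Pw L) (z : E3) (hz : ∀ i, L i z ≠ 0) :
    ∃ d, (∀ i, L i d ≠ 0) ∧ ∀ i k, i ≠ k → L i z * L k d ≠ L k z * L i d := by
  let f : Fin 12 ⊕ {p : Fin 12 × Fin 12 // p.1 ≠ p.2} → Module.Dual ℂ E3 := fun x =>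
    Sum.elim (fun i => L i) (fun p => L p.1.1 z • L p.1.2 - L p.1.2 z • L p.1.1) x
  obtain ⟨d, hd⟩ := Module.Dual.exists_forall_ne_zero_of_forall_exists f (by
    rintro (i | ⟨⟨i, k⟩, hik⟩)
    · exact ⟨z, hz i⟩
    · obtain ⟨v, hv, hv'⟩ := hL k i (Ne.symm hik)
      refine ⟨v, ?_⟩
      simp [f, hv, hv', hz i])
  refine ⟨d, fun i => hd (Sum.inl i), fun i k hik h => hd (Sum.inr ⟨(i, k), hik⟩) ?_⟩
  simp [f, h]

theorem exists_loops {L : Fin 12 → E3 →ₗ[ℂ] ℂ} (hL : Pw L) (z : MF L) (i : Fin 12) :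
    ∃ γ : ℝ → E3, Curve (MF L) γ ∧ γ 0 = z ∧ γ 1 = z ∧
      ∀ k, dl (fun t => L k (γ t)) = 2 * Real.pi * Complex.I * (if i = k then 11 else -1) := by
  obtain ⟨z, hzF⟩ := z
  have hz : ∀ i, L i z ≠ 0 := by
    intro i h
    have hx := hzF
    simp only [MF, mem_ofPred_eq] at hx
    rw [Finset.prod_eq_zero (Finset.mem_univ i) h] at hx
    exact zero_ne_one hx
  obtain ⟨d, hd, hd2⟩ := exists_dir hL z hz
  obtain ⟨r, U, hr, hr0, hr1, hU, hUe, hUd⟩ := exists_r (fun k => -(L k z) / L k d) (by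
    intro a b hab
    by_contra hne
    simp only at hab
    rw [div_eq_div_iff (hd a) (hd b)] at hab
    exact hd2 a b hne (by linear_combination -hab)) (fun k => div_ne_zero (neg_ne_zero.mpr (hz k)) (hd k)) i
  let u : ℝ → ℂ := fun t => ∑ k, (U k t - U k 0)
  have hu : Continuous u := continuous_finsetSum _ fun k _ => ((hU k).sub continuous_const)
  have hu0 : u 0 = 0 := by simp [u]
  have hu1 : u 1 = 24 * Real.pi * Complex.I := by
    show ∑ k, (U k 1 - U k 0) = _
    rw [Finset.sum_congr rfl fun k _ => hUd k]; simp
  have hLp : ∀ k, ∀ t ∈ Icc (0:ℝ) 1, L k (z + r t • d) = L k z * Complex.exp (U k t - U k 0) := by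
    intro k t ht
    have h1 := hz k
    have h2 := hd k
    have e : (0:ℂ) - -(L k z) / L k d = L k z / L k d := by ring
    rw [Complex.exp_sub, hUe k t ht, hUe k 0 mem0, hr0, map_add, map_smul, smul_eq_mul, e]
    field_simp
    ring
  have hLg : ∀ k, ∀ t ∈ Icc (0:ℝ) 1, L k (Complex.exp (-u t / 12) • (z + r t • d)) =
      Complex.exp (-u t / 12 + Complex.log (L k z) + (U k t - U k 0)) := by
    intro k t ht
    rw [map_smul, smul_eq_mul, hLp k t ht, Complex.exp_add, Complex.exp_add, Complex.exp_log (hz k), mul_assoc]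
  refine ⟨fun t => Complex.exp (-u t / 12) • (z + r t • d), ⟨by fun_prop, fun t ht => ?_⟩, ?_, ?_, fun k => ?_⟩
  · have hz1 : ∏ k, L k z = 1 := hzF
    simp only [MF, mem_ofPred_eq]
    rw [Finset.prod_congr rfl fun k _ => by rw [map_smul, smul_eq_mul, hLp k t ht]]
    rw [Finset.prod_mul_distrib, Finset.prod_mul_distrib, hz1, ← Complex.exp_sum, ← Complex.exp_sum, one_mul,
      ← Complex.exp_add, ← Complex.exp_zero]
    congr 1
    simp only [Finset.sum_const, Finset.card_univ, Fintype.card_fin, nsmul_eq_mul]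
    change ((12:ℕ):ℂ) * (-u t / 12) + u t = 0
    push_cast
    ring
  · simp [hu0, hr0]
  · have : Complex.exp (-u 1 / 12) = 1 := by
      rw [hu1, Complex.exp_eq_one_iff]; exact ⟨-1, by push_cast; ring⟩
    simp [this, hr1]
  · have hUk := hU k
    rw [dl_eq (u := fun t => -u t / 12 + Complex.log (L k z) + (U k t - U k 0)) (by fun_prop)
      (fun t ht => (hLg k t ht).symm)]
    have := hUd k
    simp only [hu0, hu1]
    split_ifs at this ⊢ with h
    · linear_combination this
    · linear_combination this

end Milnor

end

section
open Set Topology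
set_option linter.unusedSectionVars false
namespace Milnor

noncomputable def dotL (a : E3) : E3 →ₗ[ℂ] ℂ := ∑ k, a k • LinearMap.proj k

theorem dotL_apply (a z : E3) : dotL a z = ∑ k, a k * z k := by
  simp [dotL]

theorem pw_dotL (a : Fin 12 → E3)
    (hind : ∀ i j : Fin 12, i ≠ j → LinearIndependent ℂ ![a i, a j]) : Pw (fun i => dotL (a i)) := by
  intro i j hij
  have h := hind i j hij
  have hx := (crossProduct_ne_zero_iff_linearIndependent).mpr h
  obtain ⟨c, hc⟩ := Function.ne_iff.mp hx
  refine ⟨crossProduct (a j) (Pi.single c 1), ?_, ?_⟩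
  · simp only [dotL_apply]
    exact dot_self_cross (a j) _
  · simp only [dotL_apply]
    change a i ⬝ᵥ _ ≠ 0
    rw [← triple_product_permutation, single_one_dotProduct]
    exact hc
open scoped TensorProduct

theorem betti_main (L : Fin 12 → E3 →ₗ[ℂ] ℂ) (hL : Pw L) (z : MF L) (j₃ j₄ : Fin 12)
    (h3 : ∀ v : E3, v ≠ 0 → L j₃ v = 0 → Nat.card {i // L i v = 0} ≤ 3)
    (h4 : ∀ v : E3, v ≠ 0 → L j₄ v = 0 → Nat.card {i // L i v = 0} = 1 ∨
      Nat.card {i // L i v = 0} = 2 ∨ Nat.card {i // L i v = 0} = 4) :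
    Module.rank ℂ (VV z) = 11 := by
  apply le_antisymm
  · apply upper z hL
    intro w k hk0 hk γ hγ hF h01
    have hk11 : ¬ 12 ∣ k * 11 := by omega
    by_cases h : 4 ∣ k
    · obtain ⟨c⟩ := exists_coord hL j₄
      refine c.vanish hL w hk11 ?_ hγ hF h01
      intro v hv hjv hcard
      rcases h4 v hv hjv with e | e | e
      · omega
      · omega
      · rw [e]; omega
    · obtain ⟨c⟩ := exists_coord hL j₃
      refine c.vanish hL w hk11 ?_ hγ hF h01
      intro v hv hjv hcard
      have e := le_antisymm (h3 v hv hjv) hcard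
      rw [e]; omega
  · choose γ hγ h0 h1 hd using fun i : Fin 11 => exists_loops hL z i.castSucc
    refine lower z γ hγ h0 h1 fun i k => ?_
    rw [hd]
    simp only [Fin.castSucc_inj]

end Milnor

end


open scoped TensorProduct
theorem milnor_fiber_betti_twelve_lines
    (a : Fin 12 → Fin 3 → ℂ)
    (ha : ∀ i, a i ≠ 0)
    (hind : ∀ i j : Fin 12, i ≠ j → LinearIndependent ℂ ![a i, a j])
    (ℓ : Fin 12 → (Fin 3 → ℂ) → ℂ)
    (hℓ : ∀ i z, ℓ i z = ∑ k, a i k * z k)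
    (m : (Fin 3 → ℂ) → ℕ)
    (hm : ∀ v, m v = Nat.card {i : Fin 12 // ℓ i v = 0})
    (F : Set (Fin 3 → ℂ)) (hF : F = {z | ∏ i, ℓ i z = 1})
    (z₀ : F)
    (j₃ : Fin 12)
    (hj₃le : ∀ v : Fin 3 → ℂ, v ≠ 0 → ℓ j₃ v = 0 → m v ≤ 3)
    (hj₃ex : ∃ v : Fin 3 → ℂ, v ≠ 0 ∧ ℓ j₃ v = 0 ∧ m v = 3)
    (j₄ : Fin 12)
    (hj₄mem : ∀ v : Fin 3 → ℂ, v ≠ 0 → ℓ j₄ v = 0 → m v = 1 ∨ m v = 2 ∨ m v = 4)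
    (hj₄ex : ∃ v : Fin 3 → ℂ, v ≠ 0 ∧ ℓ j₄ v = 0 ∧ m v = 4) :
    Module.rank ℂ (ℂ ⊗[ℤ] Additive (Abelianization (FundamentalGroup F z₀))) = 11 := by
  have e : ℓ = fun i z => Milnor.dotL (a i) z := by
    funext i z
    rw [hℓ, Milnor.dotL_apply]
  subst e
  have hF' : F = Milnor.MF (fun i => Milnor.dotL (a i)) := hF
  subst hF'
  refine Milnor.betti_main _ (Milnor.pw_dotL a hind) z₀ j₃ j₄ ?_ ?_
  · intro v hv h
    rw [← hm]; exact hj₃le v hv h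
  · intro v hv h
    rw [← hm]; exact hj₄mem v hv h
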